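/- arXiv:1010.1969 — 7 statements merged into one kernel-verified Lean document; each statement's English description precedes it below -/
import Mathlib

section
/- Let d ≥ 1, ε > 0, and let u : ℝ^d → ℂ be a Schwartz function. Then for every x ∈ ℝ^d, u(x) = (2πε)^{-3d/2} ∫_{ℝ^d} ∫_{ℝ^d} ∫_{ℝ^d} 2^{d/2} e^{(i/ε) Φ₀(x,y,q,p)} u(y) dy dp dq, where the integral is the iterated integral (innermost in y, then p, then q) and Φ₀(x,y,q,p) = (i/2)|x−q|² + p·(x−q) + (i/2)|y−q|² − p·(y−q). -/
open MeasureTheory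

noncomputable section

lemma aux_iter (n : ℕ) : iteratedDeriv n (fun t : ℝ => Real.exp (-t)) =
    fun t => (-1 : ℝ) ^ n * Real.exp (-t) := by
  funext t
  have := iteratedDeriv_comp_neg n Real.exp t
  rw [this]
  simp [iteratedDeriv_eq_iterate]

lemma aux_temp {E : Type*} [NormedAddCommGroup E] [NormedSpace ℝ E] (f : E → ℝ)
    (hf : f.HasTemperateGrowth) (h0 : ∀ x, 0 ≤ f x) :
    (fun x => Real.exp (-(f x))).HasTemperateGrowth := by
  have hc : ContDiff ℝ (⊤ : ℕ∞) (fun t : ℝ => Real.exp (-t)) := by fun_prop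
  refine Function.HasTemperateGrowth.comp' (g := fun t : ℝ => Real.exp (-t)) (t := Set.Ici 0)
    ?_ (uniqueDiffOn_Ici 0) hc.contDiffOn ?_ hf
  · rintro _ ⟨x, rfl⟩; exact h0 x
  · intro N
    refine ⟨0, 1, zero_le_one, fun n _ x hx => ?_⟩
    rw [iteratedFDerivWithin_eq_iteratedFDeriv (uniqueDiffOn_Ici 0)
      (hc.contDiffAt.of_le (mod_cast le_top)) hx, norm_iteratedFDeriv_eq_norm_iteratedDeriv,
      aux_iter]
    simpa using hx

open FourierTransform in
lemma aux_inv (d : ℕ) (g : SchwartzMap (Fin d → ℝ) ℂ) (x : Fin d → ℝ) :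
    ∫ p : Fin d → ℝ, ∫ y : Fin d → ℝ,
      Complex.exp (Complex.I * ((2 * Real.pi * ∑ i, p i * (x i - y i) : ℝ) : ℂ)) * g y = g x := by
  let L : EuclideanSpace ℝ (Fin d) ≃L[ℝ] (Fin d → ℝ) := EuclideanSpace.equiv (Fin d) ℝ
  let G : SchwartzMap (EuclideanSpace ℝ (Fin d)) ℂ :=
    SchwartzMap.compCLMOfContinuousLinearEquiv ℂ L g
  have hG : ∀ v, G v = g (WithLp.ofLp v) := fun v => rfl
  have h1 : 𝓕⁻ (𝓕 (G : EuclideanSpace ℝ (Fin d) → ℂ)) (WithLp.toLp 2 x) = g x := by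
    rw [G.continuous.fourierInv_fourier_eq G.integrable (𝓕 G).integrable]
    rfl
  rw [← h1, Real.fourierInv_eq']
  rw [← (PiLp.volume_preserving_ofLp (Fin d)).integral_comp
    (MeasurableEquiv.toLp 2 (Fin d → ℝ)).symm.measurableEmbedding]
  refine integral_congr_ae (.of_forall fun p => ?_)
  simp only [Real.fourier_eq']
  rw [← (PiLp.volume_preserving_ofLp (Fin d)).integral_comp
    (MeasurableEquiv.toLp 2 (Fin d → ℝ)).symm.measurableEmbedding, ← integral_smul]
  refine integral_congr_ae (.of_forall fun y => ?_)
  simp only [smul_eq_mul, hG]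
  rw [← mul_assoc, ← Complex.exp_add]
  congr 2
  simp only [PiLp.inner_apply, RCLike.inner_apply, conj_trivial]
  simp only [mul_sub, Finset.sum_sub_distrib]
  push_cast
  simp only [mul_comm (Complex.ofReal (p.ofLp _))]
  ring

lemma aux_inv' (d : ℕ) (ε : ℝ) (hε : 0 < ε) (g : SchwartzMap (Fin d → ℝ) ℂ) (x : Fin d → ℝ) :
    ∫ p : Fin d → ℝ, ∫ y : Fin d → ℝ,
      Complex.exp (Complex.I / ε * ((∑ i, p i * (x i - y i) : ℝ) : ℂ)) * g y
      = ((2 * Real.pi * ε) ^ d : ℝ) * g x := by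
  have hR : 0 < 2 * Real.pi * ε := by positivity
  have h := Measure.integral_comp_smul (volume : Measure (Fin d → ℝ))
    (fun p => ∫ y : Fin d → ℝ,
      Complex.exp (Complex.I / ε * ((∑ i, p i * (x i - y i) : ℝ) : ℂ)) * g y) (2 * Real.pi * ε)
  rw [Module.finrank_fin_fun, abs_of_pos (by positivity), eq_inv_smul_iff₀ (by positivity)] at h
  rw [← h, Complex.real_smul]
  congr 1
  rw [← aux_inv d g x]
  refine integral_congr_ae (.of_forall fun p => integral_congr_ae (.of_forall fun y => ?_))
  simp only [Pi.smul_apply, smul_eq_mul]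
  congr 2
  have : ∑ i, 2 * Real.pi * ε * p i * (x i - y i) = ε * (2 * Real.pi * ∑ i, p i * (x i - y i)) := by
    simp only [Finset.mul_sum]
    exact Finset.sum_congr rfl fun i _ => by ring
  rw [this]
  have : (ε : ℂ) ≠ 0 := by exact_mod_cast hε.ne'
  push_cast
  field_simp

lemma aux_gauss (d : ℕ) (ε : ℝ) (hε : 0 < ε) (x : Fin d → ℝ) :
    ∫ q : Fin d → ℝ, Real.exp (-((∑ i, (x i - q i) ^ 2) / ε)) = (Real.pi * ε) ^ ((d : ℝ) / 2) := by
  have h : ∀ q : Fin d → ℝ, Real.exp (-((∑ i, (x i - q i) ^ 2) / ε)) =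
      ∏ i, Real.exp (-(1 / ε) * (x i - q i) ^ 2) := by
    intro q
    rw [← Real.exp_sum, ← Finset.mul_sum]; congr 1; ring
  simp_rw [h]
  rw [integral_fintype_prod_volume_eq_prod (f := fun i (v : ℝ) ↦ Real.exp (-(1 / ε) * (x i - v) ^ 2))]
  have h2 : ∀ i, ∫ v : ℝ, Real.exp (-(1 / ε) * (x i - v) ^ 2) = √(Real.pi * ε) := by
    intro i
    rw [integral_sub_left_eq_self (fun v : ℝ => Real.exp (-(1 / ε) * v ^ 2)) volume (x i),
      integral_gaussian]
    congr 1; field_simp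
  simp_rw [h2]
  rw [Finset.prod_const, Finset.card_univ, Fintype.card_fin, Real.sqrt_eq_rpow,
    ← Real.rpow_natCast, ← Real.rpow_mul (by positivity)]
  congr 1; ring

/-- The frozen Gaussian (FBI / wave packet) reconstruction identity:
for a Schwartz function `u` on `ℝ^d` and `ε > 0`,
`u x = (2πε)^{-3d/2} ∫∫∫ 2^{d/2} e^{(i/ε)Φ₀(x,y,q,p)} u(y) dy dp dq`. -/
theorem stmt_0 (d : ℕ) (hd : 1 ≤ d) (ε : ℝ) (hε : 0 < ε)
    (u : SchwartzMap (Fin d → ℝ) ℂ) (x : Fin d → ℝ) :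
    u x = (((2 * Real.pi * ε) ^ (-(3 * (d : ℝ)) / 2) : ℝ) : ℂ) *
      ∫ q : Fin d → ℝ, ∫ p : Fin d → ℝ, ∫ y : Fin d → ℝ,
        (((2 : ℝ) ^ ((d : ℝ) / 2) : ℝ) : ℂ) *
          Complex.exp ((Complex.I / (ε : ℂ)) *
            ((Complex.I / 2) * ((∑ i, (x i - q i) ^ 2 : ℝ) : ℂ)
              + ((∑ i, p i * (x i - q i) : ℝ) : ℂ)
              + (Complex.I / 2) * ((∑ i, (y i - q i) ^ 2 : ℝ) : ℂ)
              - ((∑ i, p i * (y i - q i) : ℝ) : ℂ))) * u y := by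
  have hεc : (ε : ℂ) ≠ 0 := by exact_mod_cast hε.ne'
  have key : ∀ q : Fin d → ℝ, (∫ p : Fin d → ℝ, ∫ y : Fin d → ℝ,
        (((2 : ℝ) ^ ((d : ℝ) / 2) : ℝ) : ℂ) *
          Complex.exp ((Complex.I / (ε : ℂ)) *
            ((Complex.I / 2) * ((∑ i, (x i - q i) ^ 2 : ℝ) : ℂ)
              + ((∑ i, p i * (x i - q i) : ℝ) : ℂ)
              + (Complex.I / 2) * ((∑ i, (y i - q i) ^ 2 : ℝ) : ℂ)
              - ((∑ i, p i * (y i - q i) : ℝ) : ℂ))) * u y) =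
      ((Real.exp (-((∑ i, (x i - q i) ^ 2) / ε)) : ℝ) : ℂ) *
        ((((2 : ℝ) ^ ((d : ℝ) / 2) * (2 * Real.pi * ε) ^ d : ℝ) : ℂ) * u x) := by
    intro q
    let W : (Fin d → ℝ) → ℝ := fun y => Real.exp (-((∑ i, (y i - q i) ^ 2) / (2 * ε)))
    have hW : W.HasTemperateGrowth := by
      apply aux_temp
      · have h1 : ∀ i, (fun y : Fin d → ℝ => y i).HasTemperateGrowth := fun i =>
          (ContinuousLinearMap.proj (R := ℝ) (φ := fun _ : Fin d => ℝ) i).hasTemperateGrowth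
        have h2 : (fun y : Fin d → ℝ => ∑ i, (y i - q i) ^ 2).HasTemperateGrowth :=
          Function.HasTemperateGrowth.sum fun i _ => ((h1 i).sub (.const (q i))).pow 2
        exact h2.mul (.const (2 * ε)⁻¹)
      · intro y; positivity
    let g : SchwartzMap (Fin d → ℝ) ℂ := SchwartzMap.smulLeftCLM ℂ W u
    have hg : ∀ y, g y = (W y : ℂ) * u y := fun y => by
      simp only [g]
      rw [SchwartzMap.smulLeftCLM_apply_apply hW, Complex.real_smul]
    have h := aux_inv' d ε hε g x
    have h3 : ((Real.exp (-((∑ i, (x i - q i) ^ 2) / ε)) : ℝ) : ℂ) = W x * W x := by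
      rw [← Complex.ofReal_mul, ← Real.exp_add]
      congr 2; field_simp; ring
    trans (((2 : ℝ) ^ ((d : ℝ) / 2) : ℝ) : ℂ) * W x * (((2 * Real.pi * ε) ^ d : ℝ) * g x)
    · rw [← h, ← integral_const_mul]
      refine integral_congr_ae (.of_forall fun p => ?_)
      simp only
      rw [← integral_const_mul]
      refine integral_congr_ae (.of_forall fun y => ?_)
      simp only [hg]
      have : Complex.exp ((Complex.I / (ε : ℂ)) *
            ((Complex.I / 2) * ((∑ i, (x i - q i) ^ 2 : ℝ) : ℂ)
              + ((∑ i, p i * (x i - q i) : ℝ) : ℂ)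
              + (Complex.I / 2) * ((∑ i, (y i - q i) ^ 2 : ℝ) : ℂ)
              - ((∑ i, p i * (y i - q i) : ℝ) : ℂ))) =
          W x * W y * Complex.exp (Complex.I / ε * ((∑ i, p i * (x i - y i) : ℝ) : ℂ)) := by
        simp only [W, Complex.ofReal_exp]
        rw [← Complex.exp_add, ← Complex.exp_add]
        congr 1
        have e : ∑ i, p i * (x i - y i) = ∑ i, p i * (x i - q i) - ∑ i, p i * (y i - q i) := by
          rw [← Finset.sum_sub_distrib]
          exact Finset.sum_congr rfl fun i _ => by ring
        rw [e]
        generalize ∑ i, p i * (x i - q i) = A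
        generalize ∑ i, p i * (y i - q i) = B
        generalize ∑ i, (x i - q i) ^ 2 = C
        generalize ∑ i, (y i - q i) ^ 2 = D
        push_cast
        field_simp
        linear_combination (C + D : ℂ) * Complex.I_sq
      rw [this]; ring
    · rw [h3, hg]; push_cast; ring
  simp_rw [key]
  rw [integral_mul_const, integral_complex_ofReal, aux_gauss d ε hε x]
  rw [← mul_assoc, ← mul_assoc, ← Complex.ofReal_mul, ← Complex.ofReal_mul]
  have : (2 * Real.pi * ε) ^ (-(3 * (d : ℝ)) / 2) * (Real.pi * ε) ^ ((d : ℝ) / 2) *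
      ((2 : ℝ) ^ ((d : ℝ) / 2) * (2 * Real.pi * ε) ^ d) = 1 := by
    have e : (2 * Real.pi * ε) ^ ((d : ℝ) / 2) =
      (2 : ℝ) ^ ((d : ℝ) / 2) * (Real.pi * ε) ^ ((d : ℝ) / 2) := by
      rw [← Real.mul_rpow (by positivity) (by positivity), mul_assoc]
    have hR : 0 < 2 * Real.pi * ε := by positivity
    calc _ = (2 * Real.pi * ε) ^ (-(3 * (d : ℝ)) / 2) * (2 * Real.pi * ε) ^ ((d : ℝ) / 2) *
          (2 * Real.pi * ε) ^ (d : ℝ) := by rw [e, Real.rpow_natCast]; ring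
      _ = 1 := by
        rw [← Real.rpow_add hR, ← Real.rpow_add hR]
        convert Real.rpow_zero _ using 2
        ring
  rw [this]; simp
end
end

section
/- Let H : ℝ^d × ℝ^d → ℝ be smooth, and suppose (Q, P) : [0,T] × ℝ^d × ℝ^d → ℝ^d × ℝ^d is jointly smooth and solves the Hamiltonian system ∂_t Q(t,q,p) = ∂_P H(Q,P), ∂_t P(t,q,p) = −∂_Q H(Q,P) with Q(0,q,p) = q, P(0,q,p) = p. Let S : [0,T] × ℝ^d × ℝ^d → ℝ be jointly smooth with ∂_t S(t,q,p) = P(t,q,p)·∂_P H(Q(t,q,p),P(t,q,p)) − H(Q(t,q,p),P(t,q,p)) and S(0,q,p) = 0. Then for all t ∈ [0,T], (q,p) ∈ ℝ^{2d} and all indices i = 1,…,d: ∂_{q_i} S(t,q,p) = Σ_j (∂_{q_i} Q_j(t,q,p)) P_j(t,q,p) − p_i and ∂_{p_i} S(t,q,p) = Σ_j (∂_{p_i} Q_j(t,q,p)) P_j(t,q,p). -/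
noncomputable section


theorem aux_curve {X F : Type*} [NormedAddCommGroup X] [NormedSpace ℝ X]
    [NormedAddCommGroup F] [NormedSpace ℝ F] {f : X → F} (hf : Differentiable ℝ f)
    (z v : X) (s : ℝ) : HasDerivAt (fun s : ℝ => f (z + s • v)) (fderiv ℝ f (z + s • v) v) s := by
  have h1 : HasDerivAt (fun s : ℝ => z + s • v) v s := by
    simpa using ((hasDerivAt_id s).smul_const v).const_add z
  exact (hf _).hasFDerivAt.comp_hasDerivAt s h1

theorem aux_curve2 {X F : Type*} [NormedAddCommGroup X] [NormedSpace ℝ X]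
    [NormedAddCommGroup F] [NormedSpace ℝ F] {f : X → F} (hf : ContDiff ℝ (⊤ : ℕ∞) f)
    (z v u : X) (s : ℝ) : HasDerivAt (fun s : ℝ => fderiv ℝ f (z + s • v) u)
      (fderiv ℝ (fderiv ℝ f) (z + s • v) v u) s := by
  have hd : Differentiable ℝ (fderiv ℝ f) :=
    (hf.fderiv_right (m := 1) (WithTop.coe_le_coe.2 (le_top : (2:ℕ∞) ≤ ⊤))).differentiable (by norm_num)
  have := aux_curve hd z v s
  exact ((ContinuousLinearMap.apply ℝ F u).hasFDerivAt.comp_hasDerivAt s this)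

theorem aux_symm {X F : Type*} [NormedAddCommGroup X] [NormedSpace ℝ X]
    [NormedAddCommGroup F] [NormedSpace ℝ F] {f : X → F} (hf : ContDiff ℝ (⊤ : ℕ∞) f)
    (z v u : X) : fderiv ℝ (fderiv ℝ f) z v u = fderiv ℝ (fderiv ℝ f) z u v := by
  have : IsSymmSndFDerivAt ℝ f z :=
    hf.contDiffAt.isSymmSndFDerivAt (by simpa using (WithTop.coe_le_coe.2 (le_top : (2:ℕ∞) ≤ ⊤)))
  exact this v u

theorem aux_single {d : ℕ} (i : Fin d) :
    (fun j => if i = j then (1:ℝ) else 0) = Pi.single i 1 := by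
  ext j; simp [Pi.single_apply, eq_comm]

theorem aux_H {d : ℕ} (L : (Fin d → ℝ) × (Fin d → ℝ) →L[ℝ] ℝ) (a b : Fin d → ℝ) :
    L (a, b) = (∑ j, a j * L (Pi.single j 1, 0)) + ∑ j, b j * L (0, Pi.single j 1) := by
  have h1 : L (a, b) = L (a, 0) + L (0, b) := by rw [← map_add]; simp
  have h2 : L (a, 0) = ∑ j, a j * L (Pi.single j 1, 0) := by
    have := LinearMap.pi_apply_eq_sum_univ
      (L.toLinearMap ∘ₗ LinearMap.inl ℝ (Fin d → ℝ) (Fin d → ℝ)) a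
    simpa [aux_single] using this
  have h3 : L (0, b) = ∑ j, b j * L (0, Pi.single j 1) := by
    have := LinearMap.pi_apply_eq_sum_univ
      (L.toLinearMap ∘ₗ LinearMap.inr ℝ (Fin d → ℝ) (Fin d → ℝ)) b
    simpa [aux_single] using this
  rw [h1, h2, h3]

theorem aux_main (d : ℕ) (T : ℝ) (hT : 0 < T)
    (H : (Fin d → ℝ) × (Fin d → ℝ) → ℝ)
    (Q P : ℝ × (Fin d → ℝ) × (Fin d → ℝ) → Fin d → ℝ)
    (S : ℝ × (Fin d → ℝ) × (Fin d → ℝ) → ℝ)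
    (hH : ContDiff ℝ (⊤ : ℕ∞) H)
    (hQ : ContDiff ℝ (⊤ : ℕ∞) Q) (hP : ContDiff ℝ (⊤ : ℕ∞) P) (hS : ContDiff ℝ (⊤ : ℕ∞) S)
    (hQt : ∀ t ∈ Set.Icc (0:ℝ) T, ∀ q p : Fin d → ℝ, ∀ j : Fin d,
      fderiv ℝ Q (t, q, p) (1, 0, 0) j
        = fderiv ℝ H (Q (t, q, p), P (t, q, p)) (0, Pi.single j 1))
    (hPt : ∀ t ∈ Set.Icc (0:ℝ) T, ∀ q p : Fin d → ℝ, ∀ j : Fin d,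
      fderiv ℝ P (t, q, p) (1, 0, 0) j
        = - fderiv ℝ H (Q (t, q, p), P (t, q, p)) (Pi.single j 1, 0))
    (hQ0 : ∀ q p : Fin d → ℝ, Q (0, q, p) = q)
    (hP0 : ∀ q p : Fin d → ℝ, P (0, q, p) = p)
    (hSt : ∀ t ∈ Set.Icc (0:ℝ) T, ∀ q p : Fin d → ℝ,
      fderiv ℝ S (t, q, p) (1, 0, 0)
        = (∑ j, P (t, q, p) j * fderiv ℝ H (Q (t, q, p), P (t, q, p)) (0, Pi.single j 1))
          - H (Q (t, q, p), P (t, q, p)))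
    (hS0 : ∀ q p : Fin d → ℝ, S (0, q, p) = 0) :
    ∀ t ∈ Set.Icc (0:ℝ) T, ∀ q p a b : Fin d → ℝ,
      fderiv ℝ S (t, q, p) (0, a, b)
        = (∑ j, fderiv ℝ Q (t, q, p) (0, a, b) j * P (t, q, p) j) - ∑ j, a j * p j := by
  intro t ht q p a b
  have dQ := hQ.differentiable (by simp)
  have dP := hP.differentiable (by simp)
  have dS := hS.differentiable (by simp)
  have dH := hH.differentiable (by simp)
  -- curves in the time direction
  have ct : ∀ t : ℝ, ((0:ℝ), q, p) + t • ((1:ℝ), (0 : Fin d → ℝ), (0 : Fin d → ℝ)) = (t, q, p) := by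
    intro t; simp
  have cs : ∀ t s : ℝ, (t, q, p) + s • ((0:ℝ), a, b) = (t, q + s • a, p + s • b) := by
    intro t s; simp
  have key : ∀ t ∈ Set.Icc (0:ℝ) T, HasDerivAt (fun t => fderiv ℝ S (t, q, p) (0, a, b)
        - (∑ j, fderiv ℝ Q (t, q, p) (0, a, b) j * P (t, q, p) j)) 0 t := by
    intro t ht
    have e1 := aux_curve2 hS (0, q, p) (1, 0, 0) (0, a, b) t
    have e2 := aux_curve2 hQ (0, q, p) (1, 0, 0) (0, a, b) t
    have e3 := aux_curve dP (0, q, p) (1, 0, 0) t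
    simp only [ct] at e1 e2 e3
    have e4 := e1.sub (HasDerivAt.fun_sum (u := Finset.univ) fun j _ =>
      (hasDerivAt_pi.1 e2 j).mul (hasDerivAt_pi.1 e3 j))
    refine e4.congr_deriv ?_
    have f1 := aux_curve2 hS (t, q, p) (0, a, b) (1, 0, 0) 0
    have f2 := aux_curve2 hQ (t, q, p) (0, a, b) (1, 0, 0) 0
    have f3 := aux_curve dP (t, q, p) (0, a, b) 0
    have f4 := aux_curve dQ (t, q, p) (0, a, b) 0
    have f5 := (HasDerivAt.fun_sum (u := Finset.univ) fun j _ =>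
      (hasDerivAt_pi.1 f3 j).mul (hasDerivAt_pi.1 f2 j))
    have f6 := (dH _).hasFDerivAt.comp_hasDerivAt (0:ℝ) (f4.prodMk f3)
    have f7 := f5.sub f6
    have f8 := f1.unique (f7.congr_of_eventuallyEq (Filter.Eventually.of_forall fun s => by
      simp only [cs, hSt t ht, hQt t ht, Pi.sub_apply, Pi.mul_apply, Function.comp]))
    simp only [zero_smul, add_zero] at f8
    rw [aux_symm hS, f8, aux_H, aux_symm hQ]
    simp only [hQt t ht, hPt t ht]
    simp only [← Finset.sum_add_distrib, ← Finset.sum_sub_distrib]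
    refine Finset.sum_eq_zero fun j _ => ?_
    ring
  have hc := constant_of_has_deriv_right_zero
    (fun t ht => (key t ht).continuousAt.continuousWithinAt)
    (fun t ht => (key t (Set.Ico_subset_Icc_self ht)).hasDerivWithinAt) t ht
  have i1 : fderiv ℝ S (0, q, p) (0, a, b) = 0 := by
    have := aux_curve dS (0, q, p) (0, a, b) 0
    simp only [cs, hS0, zero_smul, add_zero] at this
    exact this.unique (hasDerivAt_const _ _)
  have i2 : fderiv ℝ Q (0, q, p) (0, a, b) = a := by
    have := aux_curve dQ (0, q, p) (0, a, b) 0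
    simp only [cs, hQ0, zero_smul, add_zero] at this
    refine this.unique ?_
    simpa using ((hasDerivAt_id (0:ℝ)).smul_const a).const_add q
  simp only [i1, i2, hP0] at hc
  linarith

/-- Along the Hamiltonian flow `(Q,P)` with Hamiltonian `H` and the associated
action `S` (with `∂ₜS = P·∂_P H − H`, `S(0)=0`), one has, for all `t ∈ [0,T]` and all `i`,
`∂_{qᵢ} S = Σ_j (∂_{qᵢ} Q_j) P_j − pᵢ` and `∂_{pᵢ} S = Σ_j (∂_{pᵢ} Q_j) P_j`. -/
theorem stmt_1 (d : ℕ) (T : ℝ) (hT : 0 < T)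
    (H : (Fin d → ℝ) × (Fin d → ℝ) → ℝ)
    (Q P : ℝ × (Fin d → ℝ) × (Fin d → ℝ) → Fin d → ℝ)
    (S : ℝ × (Fin d → ℝ) × (Fin d → ℝ) → ℝ)
    (hH : ContDiff ℝ (⊤ : ℕ∞) H)
    (hQ : ContDiff ℝ (⊤ : ℕ∞) Q) (hP : ContDiff ℝ (⊤ : ℕ∞) P) (hS : ContDiff ℝ (⊤ : ℕ∞) S)
    (hQt : ∀ t ∈ Set.Icc (0:ℝ) T, ∀ q p : Fin d → ℝ, ∀ j : Fin d,
      fderiv ℝ Q (t, q, p) (1, 0, 0) j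
        = fderiv ℝ H (Q (t, q, p), P (t, q, p)) (0, Pi.single j 1))
    (hPt : ∀ t ∈ Set.Icc (0:ℝ) T, ∀ q p : Fin d → ℝ, ∀ j : Fin d,
      fderiv ℝ P (t, q, p) (1, 0, 0) j
        = - fderiv ℝ H (Q (t, q, p), P (t, q, p)) (Pi.single j 1, 0))
    (hQ0 : ∀ q p : Fin d → ℝ, Q (0, q, p) = q)
    (hP0 : ∀ q p : Fin d → ℝ, P (0, q, p) = p)
    (hSt : ∀ t ∈ Set.Icc (0:ℝ) T, ∀ q p : Fin d → ℝ,
      fderiv ℝ S (t, q, p) (1, 0, 0)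
        = (∑ j, P (t, q, p) j * fderiv ℝ H (Q (t, q, p), P (t, q, p)) (0, Pi.single j 1))
          - H (Q (t, q, p), P (t, q, p)))
    (hS0 : ∀ q p : Fin d → ℝ, S (0, q, p) = 0) :
    ∀ t ∈ Set.Icc (0:ℝ) T, ∀ q p : Fin d → ℝ, ∀ i : Fin d,
      fderiv ℝ S (t, q, p) (0, Pi.single i 1, 0)
        = (∑ j, fderiv ℝ Q (t, q, p) (0, Pi.single i 1, 0) j * P (t, q, p) j) - p i
      ∧ fderiv ℝ S (t, q, p) (0, 0, Pi.single i 1)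
        = ∑ j, fderiv ℝ Q (t, q, p) (0, 0, Pi.single i 1) j * P (t, q, p) j := by
  intro t ht q p i
  have h := aux_main d T hT H Q P S hH hQ hP hS hQt hPt hQ0 hP0 hSt hS0 t ht q p
  constructor
  · rw [h]; simp [Pi.single_apply]
  · rw [h]; simp
end
end

section
/- Let A, B, C, D be real d × d matrices such that the 2d × 2d block matrix M = [[A, B], [C, D]] is symplectic, i.e. Mᵀ J M = J where J = [[0, I_d], [−I_d, 0]]. Then the complex d × d matrix Z = (A + D) + i(C − B) is invertible. -/
open Matrix

noncomputable section

/-- If the block matrix `M = [[A,B],[C,D]]` is symplectic (`Mᵀ J M = J` with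
`J = [[0,I],[−I,0]]`), then the complex matrix `Z = (A+D) + i(C−B)` is invertible. -/
theorem stmt_2 (d : ℕ) (A B C D : Matrix (Fin d) (Fin d) ℝ)
    (hM : (Matrix.fromBlocks A B C D)ᵀ * Matrix.fromBlocks (0 : Matrix (Fin d) (Fin d) ℝ) 1 (-1) 0
            * Matrix.fromBlocks A B C D
          = Matrix.fromBlocks (0 : Matrix (Fin d) (Fin d) ℝ) 1 (-1) 0) :
    IsUnit ((A + D).map (fun a => (a : ℂ)) + Complex.I • (C - B).map (fun a => (a : ℂ))) := by
  rw [fromBlocks_transpose, fromBlocks_multiply, fromBlocks_multiply, fromBlocks_inj] at hM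
  simp only [mul_zero, mul_one, mul_neg, zero_add, add_zero, neg_mul] at hM
  obtain ⟨h1, h2, h3, h4⟩ := hM
  have key : ∀ X : Matrix (Fin d) (Fin d) ℝ,
      (X.map (fun a => (a : ℂ)))ᴴ = (Xᵀ).map (fun a => (a : ℂ)) := by
    intro X; ext i j; simp
  have hm : ∀ X Y : Matrix (Fin d) (Fin d) ℝ, (X * Y).map (fun a => (a : ℂ))
      = X.map (fun a => (a : ℂ)) * Y.map (fun a => (a : ℂ)) := by
    intro X Y; exact Matrix.map_mul (f := Complex.ofRealHom)
  have ha : ∀ X Y : Matrix (Fin d) (Fin d) ℝ, (X + Y).map (fun a => (a : ℂ))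
      = X.map (fun a => (a : ℂ)) + Y.map (fun a => (a : ℂ)) := by
    intro X Y; ext i j; simp
  have hs : ∀ X Y : Matrix (Fin d) (Fin d) ℝ, (X - Y).map (fun a => (a : ℂ))
      = X.map (fun a => (a : ℂ)) - Y.map (fun a => (a : ℂ)) := by
    intro X Y; ext i j; simp
  have hn : ∀ X : Matrix (Fin d) (Fin d) ℝ, (-X).map (fun a => (a : ℂ))
      = -X.map (fun a => (a : ℂ)) := by
    intro X; ext i j; simp
  have h0 : (0 : Matrix (Fin d) (Fin d) ℝ).map (fun a => (a : ℂ)) = 0 := by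
    ext i j; simp
  have h1' : (1 : Matrix (Fin d) (Fin d) ℝ).map (fun a => (a : ℂ)) = 1 := by
    ext i j; simp [Matrix.one_apply, apply_ite]
  replace h1 := congrArg (fun X => X.map (fun a : ℝ => (a : ℂ))) h1
  replace h2 := congrArg (fun X => X.map (fun a : ℝ => (a : ℂ))) h2
  replace h3 := congrArg (fun X => X.map (fun a : ℝ => (a : ℂ))) h3
  replace h4 := congrArg (fun X => X.map (fun a : ℝ => (a : ℂ))) h4
  simp only [ha, hn, hm, h0, h1', ← key] at h1 h2 h3 h4
  rw [ha, hs]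
  generalize A.map (fun a => (a : ℂ)) = a at *
  generalize B.map (fun a => (a : ℂ)) = b at *
  generalize C.map (fun a => (a : ℂ)) = c at *
  generalize D.map (fun a => (a : ℂ)) = e at *
  set Z := a + e + Complex.I • (c - b) with hZ
  have hE : Zᴴ * Z = (a - Complex.I • b)ᴴ * (a - Complex.I • b)
      + (c - Complex.I • e)ᴴ * (c - Complex.I • e) + (1 + 1) := by
    rw [hZ]
    simp only [conjTranspose_add, conjTranspose_sub, conjTranspose_smul, add_mul, mul_add,
      sub_mul, mul_sub, smul_mul_assoc, mul_smul_comm, smul_smul, smul_add, smul_sub,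
      Complex.star_def, Complex.conj_I, neg_mul, mul_neg, Complex.I_mul_I, neg_neg, one_smul,
      neg_smul, smul_neg]
    linear_combination (norm := module) Complex.I • h1 + Complex.I • h4 + h2 - h3
  open scoped ComplexOrder in
  have hP : (Zᴴ * Z).PosDef := by
    rw [hE]
    exact Matrix.PosDef.posSemidef_add ((posSemidef_conjTranspose_mul_self _).add
      (posSemidef_conjTranspose_mul_self _)) (PosDef.one.add PosDef.one)
  exact isUnit_of_mul_isUnit_right hP.isUnit
end
end

section
/- Let d ≥ 1, ε > 0, x ∈ ℝ^d. Let Q, P : ℝ^{2d} → ℝ^d and S : ℝ^{2d} → ℝ be smooth functions of (q,p), all of whose derivatives have at most polynomial growth, and define Φ(y,q,p) = S(q,p) + (i/2)|x − Q(q,p)|² + P(q,p)·(x − Q(q,p)) + (i/2)|y − q|² − p·(y − q). Assume the complex matrix Z(q,p) with entries Z_{kj} = (∂_{q_k} − i∂_{p_k})(Q_j + iP_j) satisfies i(∂_{q_k} − i∂_{p_k})Φ = Σ_j Z_{kj}(x_j − Q_j) for all (y,q,p), is invertible for every (q,p), and that all entries of Z^{-1} together with all their derivatives have at most polynomial growth.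 Then for every Schwartz function b : ℝ^{3d} → ℂ^d of (y,q,p): ∫_{ℝ^{3d}} Σ_j b_j(y,q,p)(x_j − Q_j(q,p)) e^{iΦ/ε} dy dq dp = −ε ∫_{ℝ^{3d}} Σ_{j,k} ∂_{z_k}(b_j Z^{-1}_{jk})(y,q,p) e^{iΦ/ε} dy dq dp, where ∂_{z_k} = ∂_{q_k} − i∂_{p_k} acts in (q,p) at fixed y, and both integrands are absolutely integrable. -/
open MeasureTheory

noncomputable section

/-- The frozen Gaussian phase `Φ(y,q,p)` (with `x` fixed), on the triple space `(y,q,p)`. -/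
def FGAphase (d : ℕ) (x : Fin d → ℝ)
    (S : (Fin d → ℝ) × (Fin d → ℝ) → ℝ)
    (Q P : (Fin d → ℝ) × (Fin d → ℝ) → Fin d → ℝ)
    (w : (Fin d → ℝ) × (Fin d → ℝ) × (Fin d → ℝ)) : ℂ :=
  (S (w.2.1, w.2.2) : ℂ)
    + (Complex.I / 2) * ((∑ j, (x j - Q (w.2.1, w.2.2) j) ^ 2 : ℝ) : ℂ)
    + ((∑ j, P (w.2.1, w.2.2) j * (x j - Q (w.2.1, w.2.2) j) : ℝ) : ℂ)
    + (Complex.I / 2) * ((∑ j, (w.1 j - w.2.1 j) ^ 2 : ℝ) : ℂ)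
    - ((∑ j, w.2.2 j * (w.1 j - w.2.1 j) : ℝ) : ℂ)

/-- The entries `Z_{kj} = ∂_{z_k}(Q_j + iP_j)`, `∂_{z_k} = ∂_{q_k} − i∂_{p_k}`. -/
def Zentry (d : ℕ) (Q P : (Fin d → ℝ) × (Fin d → ℝ) → Fin d → ℝ)
    (w : (Fin d → ℝ) × (Fin d → ℝ)) (k j : Fin d) : ℂ :=
  (fderiv ℝ (fun v => ((Q v j : ℝ) : ℂ) + Complex.I * ((P v j : ℝ) : ℂ)) w (Pi.single k 1, 0))
    - Complex.I *
      (fderiv ℝ (fun v => ((Q v j : ℝ) : ℂ) + Complex.I * ((P v j : ℝ) : ℂ)) w (0, Pi.single k 1))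

/-- `∂_{z_k}` acting in `(q,p)` at fixed `y`, on functions of `(y,q,p)`. -/
def dz3 (d : ℕ) (k : Fin d)
    (g : (Fin d → ℝ) × (Fin d → ℝ) × (Fin d → ℝ) → ℂ)
    (w : (Fin d → ℝ) × (Fin d → ℝ) × (Fin d → ℝ)) : ℂ :=
  fderiv ℝ g w (0, Pi.single k 1, 0) - Complex.I * fderiv ℝ g w (0, 0, Pi.single k 1)

section helpers
variable {E : Type*} [NormedAddCommGroup E] [NormedSpace ℝ E]

lemma temperate_fderiv_apply {f : E → ℂ} (hf : f.HasTemperateGrowth) (v : E) :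
    (fun w => fderiv ℝ f w v).HasTemperateGrowth := by
  have h1 : (fderiv ℝ f).HasTemperateGrowth := by
    refine ⟨hf.1.fderiv_right (by simp), fun n => ?_⟩
    obtain ⟨k, C, h⟩ := hf.2 (n + 1)
    refine ⟨k, C, fun w => ?_⟩
    rw [norm_iteratedFDeriv_fderiv]
    exact h w
  exact ((ContinuousLinearMap.apply ℝ ℂ v).hasTemperateGrowth).comp h1

variable [FiniteDimensional ℝ E] [MeasurableSpace E] [BorelSpace E]
  (μ : Measure E) [μ.IsAddHaarMeasure]

lemma schwartz_exp_integrable (f : SchwartzMap E ℂ) {ψ : E → ℂ} (hψ : ψ.HasTemperateGrowth)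
    (hre : ∀ w, (ψ w).re ≤ 0) : Integrable (fun w => f w * Complex.exp (ψ w)) μ := by
  refine (f.integrable (μ := μ)).mono ?_ (Filter.Eventually.of_forall fun w => ?_)
  · exact (f.continuous.mul (Complex.continuous_exp.comp hψ.1.continuous)).aestronglyMeasurable
  · rw [norm_mul, Complex.norm_exp]
    exact mul_le_of_le_one_right (norm_nonneg _) (Real.exp_le_one_iff.2 (hre w))

lemma schwartz_mul_temperate (f : SchwartzMap E ℂ) {g : E → ℂ} (hg : g.HasTemperateGrowth) :
    ∃ F : SchwartzMap E ℂ, ∀ w, F w = f w * g w :=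
  ⟨SchwartzMap.smulLeftCLM ℂ g f, fun w => by
    rw [SchwartzMap.smulLeftCLM_apply_apply hg, smul_eq_mul, mul_comm]⟩

lemma schwartz_deriv_exp_integrable (f : SchwartzMap E ℂ) {ψ : E → ℂ}
    (hψ : ψ.HasTemperateGrowth) (hre : ∀ w, (ψ w).re ≤ 0) (v : E) :
    Integrable (fun w => fderiv ℝ f w v * Complex.exp (ψ w)) μ :=
  schwartz_exp_integrable μ (SchwartzMap.evalCLM ℝ E ℂ v (SchwartzMap.fderivCLM ℝ E ℂ f)) hψ hre

lemma schwartz_mul_deriv_exp_integrable (f : SchwartzMap E ℂ) {ψ : E → ℂ}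
    (hψ : ψ.HasTemperateGrowth) (hre : ∀ w, (ψ w).re ≤ 0) (v : E) :
    Integrable (fun w => f w * fderiv ℝ ψ w v * Complex.exp (ψ w)) μ := by
  obtain ⟨F, hF⟩ := schwartz_mul_temperate f (temperate_fderiv_apply hψ v)
  simpa only [hF] using schwartz_exp_integrable μ F hψ hre

lemma schwartz_exp_ibp (f : SchwartzMap E ℂ) {ψ : E → ℂ}
    (hψ : ψ.HasTemperateGrowth) (hre : ∀ w, (ψ w).re ≤ 0) (v : E) :
    ∫ w, f w * fderiv ℝ ψ w v * Complex.exp (ψ w) ∂μ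
      = - ∫ w, fderiv ℝ f w v * Complex.exp (ψ w) ∂μ := by
  have hd : Differentiable ℝ ψ := hψ.1.differentiable (by simp)
  have he : ∀ w, f w * fderiv ℝ (fun w => Complex.exp (ψ w)) w v
      = f w * fderiv ℝ ψ w v * Complex.exp (ψ w) := fun w => by
    rw [((hd w).hasFDerivAt.cexp).fderiv]
    simp; ring
  rw [← integral_mul_fderiv_eq_neg_fderiv_mul_of_integrable (f := f)
    (g := fun w => Complex.exp (ψ w))]
  · simp only [he]
  · exact schwartz_deriv_exp_integrable μ f hψ hre v
  · simpa only [he] using schwartz_mul_deriv_exp_integrable μ f hψ hre v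
  · exact schwartz_exp_integrable μ f hψ hre
  · exact fun w _ => f.differentiableAt
  · exact fun w _ => (hd w).cexp

end helpers

lemma dz3_phase_temperate (d : ℕ) (x : Fin d → ℝ)
    (S : (Fin d → ℝ) × (Fin d → ℝ) → ℝ)
    (Q P : (Fin d → ℝ) × (Fin d → ℝ) → Fin d → ℝ)
    (hS : Function.HasTemperateGrowth S)
    (hQ : Function.HasTemperateGrowth Q) (hP : Function.HasTemperateGrowth P) :
    (FGAphase d x S Q P).HasTemperateGrowth := by
  let π : (Fin d → ℝ) × (Fin d → ℝ) × (Fin d → ℝ) →L[ℝ] (Fin d → ℝ) × (Fin d → ℝ) :=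
    ContinuousLinearMap.snd ℝ _ _
  have hp : Function.HasTemperateGrowth
      (fun w : (Fin d → ℝ) × (Fin d → ℝ) × (Fin d → ℝ) => (w.2.1, w.2.2)) :=
    π.hasTemperateGrowth
  have hproj : ∀ j : Fin d, Function.HasTemperateGrowth (fun v : Fin d → ℝ => v j) := fun j =>
    (ContinuousLinearMap.proj (R := ℝ) (φ := fun _ : Fin d => ℝ) j).hasTemperateGrowth
  have hS' := hS.comp hp
  have hQ' := fun j => (hproj j).comp (hQ.comp hp)
  have hP' := fun j => (hproj j).comp (hP.comp hp)
  have h1 := fun j => (hproj j).comp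
    (ContinuousLinearMap.fst ℝ (Fin d → ℝ) ((Fin d → ℝ) × (Fin d → ℝ))).hasTemperateGrowth
  have h2 := fun j => (hproj j).comp (((ContinuousLinearMap.fst ℝ (Fin d → ℝ) (Fin d → ℝ)).comp
    (ContinuousLinearMap.snd ℝ (Fin d → ℝ) ((Fin d → ℝ) × (Fin d → ℝ)))).hasTemperateGrowth)
  have h3 := fun j => (hproj j).comp (((ContinuousLinearMap.snd ℝ (Fin d → ℝ) (Fin d → ℝ)).comp
    (ContinuousLinearMap.snd ℝ (Fin d → ℝ) ((Fin d → ℝ) × (Fin d → ℝ)))).hasTemperateGrowth)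
  have hof {f : (Fin d → ℝ) × (Fin d → ℝ) × (Fin d → ℝ) → ℝ} (hf : f.HasTemperateGrowth) :
      (fun w => (f w : ℂ)).HasTemperateGrowth := Complex.ofRealCLM.hasTemperateGrowth.comp hf
  have c := fun z : ℂ => Function.HasTemperateGrowth.const
    (E := (Fin d → ℝ) × (Fin d → ℝ) × (Fin d → ℝ)) z
  have c' := fun z : ℝ => Function.HasTemperateGrowth.const
    (E := (Fin d → ℝ) × (Fin d → ℝ) × (Fin d → ℝ)) z
  exact ((((hof hS').add ((c (Complex.I / 2)).mul (hof (Function.HasTemperateGrowth.sum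
      (s := Finset.univ) (fun j _ => ((c' (x j)).sub (hQ' j)).pow 2))))).add
    (hof (Function.HasTemperateGrowth.sum
      (s := Finset.univ) (fun j _ => (hP' j).mul ((c' (x j)).sub (hQ' j)))))).add
    ((c (Complex.I / 2)).mul (hof (Function.HasTemperateGrowth.sum
      (s := Finset.univ) (fun j _ => ((h1 j).sub (h2 j)).pow 2))))).sub
    (hof (Function.HasTemperateGrowth.sum
      (s := Finset.univ) (fun j _ => (h3 j).mul ((h1 j).sub (h2 j)))))

lemma phase_re (d : ℕ) (ε : ℝ) (hε : 0 < ε) (x : Fin d → ℝ)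
    (S : (Fin d → ℝ) × (Fin d → ℝ) → ℝ)
    (Q P : (Fin d → ℝ) × (Fin d → ℝ) → Fin d → ℝ)
    (w : (Fin d → ℝ) × (Fin d → ℝ) × (Fin d → ℝ)) :
    (Complex.I * FGAphase d x S Q P w / (ε : ℂ)).re ≤ 0 := by
  have h : 0 ≤ (FGAphase d x S Q P w).im := by
    have a1 : 0 ≤ ∑ j, (x j - Q (w.2.1, w.2.2) j) ^ 2 := Finset.sum_nonneg fun j _ => sq_nonneg _
    have a2 : 0 ≤ ∑ j, (w.1 j - w.2.1 j) ^ 2 := Finset.sum_nonneg fun j _ => sq_nonneg _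
    have hI : (Complex.I / 2).re = 0 := by simp
    have hI' : (Complex.I / 2).im = 1 / 2 := by simp
    unfold FGAphase
    simp only [Complex.sub_im, Complex.add_im, Complex.mul_im, Complex.ofReal_im,
      Complex.ofReal_re, hI, hI']
    linarith
  rw [Complex.div_ofReal_re]
  simp only [Complex.mul_re, Complex.I_re, Complex.I_im]
  apply div_nonpos_of_nonpos_of_nonneg _ hε.le
  linarith

/-- the first-order integration by parts lemma of the frozen Gaussian
approximation: `∫ b·(x−Q) e^{iΦ/ε} = −ε ∫ Σ_{j,k} ∂_{z_k}(b_j Z⁻¹_{jk}) e^{iΦ/ε}`. -/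
theorem stmt_4 (d : ℕ) (hd : 1 ≤ d) (ε : ℝ) (hε : 0 < ε) (x : Fin d → ℝ)
    (S : (Fin d → ℝ) × (Fin d → ℝ) → ℝ)
    (Q P : (Fin d → ℝ) × (Fin d → ℝ) → Fin d → ℝ)
    (hS : Function.HasTemperateGrowth S)
    (hQ : Function.HasTemperateGrowth Q) (hP : Function.HasTemperateGrowth P)
    (hZPhi : ∀ y q p : Fin d → ℝ, ∀ k : Fin d,
      Complex.I * dz3 d k (FGAphase d x S Q P) (y, q, p)
        = ∑ j, Zentry d Q P (q, p) k j * (((x j : ℝ) : ℂ) - ((Q (q, p) j : ℝ) : ℂ)))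
    (hZinv : ∀ w : (Fin d → ℝ) × (Fin d → ℝ),
      IsUnit (Matrix.of (fun k j => Zentry d Q P w k j) : Matrix (Fin d) (Fin d) ℂ))
    (Zinv : (Fin d → ℝ) × (Fin d → ℝ) → Matrix (Fin d) (Fin d) ℂ)
    (hZinvL : ∀ w, Zinv w * Matrix.of (fun k j => Zentry d Q P w k j) = 1)
    (hZinvR : ∀ w, Matrix.of (fun k j => Zentry d Q P w k j) * Zinv w = 1)
    (hZinvTemp : ∀ j k : Fin d, Function.HasTemperateGrowth (fun w => Zinv w j k))
    (b : SchwartzMap ((Fin d → ℝ) × (Fin d → ℝ) × (Fin d → ℝ)) (Fin d → ℂ)) :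
    Integrable (fun w : (Fin d → ℝ) × (Fin d → ℝ) × (Fin d → ℝ) =>
        (∑ j, b w j * (((x j : ℝ) : ℂ) - ((Q (w.2.1, w.2.2) j : ℝ) : ℂ)))
          * Complex.exp (Complex.I * FGAphase d x S Q P w / (ε : ℂ)))
    ∧ Integrable (fun w : (Fin d → ℝ) × (Fin d → ℝ) × (Fin d → ℝ) =>
        (∑ j, ∑ k, dz3 d k (fun w' => b w' j * Zinv (w'.2.1, w'.2.2) j k) w)
          * Complex.exp (Complex.I * FGAphase d x S Q P w / (ε : ℂ)))
    ∧ (∫ w : (Fin d → ℝ) × (Fin d → ℝ) × (Fin d → ℝ),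
        (∑ j, b w j * (((x j : ℝ) : ℂ) - ((Q (w.2.1, w.2.2) j : ℝ) : ℂ)))
          * Complex.exp (Complex.I * FGAphase d x S Q P w / (ε : ℂ)))
      = -(ε : ℂ) * ∫ w : (Fin d → ℝ) × (Fin d → ℝ) × (Fin d → ℝ),
        (∑ j, ∑ k, dz3 d k (fun w' => b w' j * Zinv (w'.2.1, w'.2.2) j k) w)
          * Complex.exp (Complex.I * FGAphase d x S Q P w / (ε : ℂ)) := by
  let ψ : (Fin d → ℝ) × (Fin d → ℝ) × (Fin d → ℝ) → ℂ :=
    fun w => Complex.I * FGAphase d x S Q P w / (ε : ℂ)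
  have hΦ := dz3_phase_temperate d x S Q P hS hQ hP
  have hεC : (ε : ℂ) ≠ 0 := by exact_mod_cast hε.ne'
  have hψeq : ψ = fun w => (Complex.I / (ε : ℂ)) * FGAphase d x S Q P w := by
    funext w; simp only [ψ]; ring
  have hψ : ψ.HasTemperateGrowth := by
    rw [hψeq]
    exact (Function.HasTemperateGrowth.const _).mul hΦ
  have hre : ∀ w, (ψ w).re ≤ 0 := phase_re d ε hε x S Q P
  have hdz : ∀ k w, dz3 d k ψ w = (1 / (ε : ℂ)) *
      ∑ j, Zentry d Q P (w.2.1, w.2.2) k j * (((x j : ℝ) : ℂ) - ((Q (w.2.1, w.2.2) j : ℝ) : ℂ)) := by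
    intro k w
    have hd1 : DifferentiableAt ℝ (FGAphase d x S Q P) w := (hΦ.1.differentiable (by simp)) w
    have := hZPhi w.1 w.2.1 w.2.2 k
    rw [← this, hψeq]
    unfold dz3
    rw [fderiv_const_mul hd1]
    simp only [smul_apply, smul_eq_mul, Prod.mk.eta]
    ring
  have hp : Function.HasTemperateGrowth
      (fun w : (Fin d → ℝ) × (Fin d → ℝ) × (Fin d → ℝ) => (w.2.1, w.2.2)) :=
    (ContinuousLinearMap.snd ℝ (Fin d → ℝ) ((Fin d → ℝ) × (Fin d → ℝ))).hasTemperateGrowth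
  have hF : ∀ j k, ∃ F : SchwartzMap ((Fin d → ℝ) × (Fin d → ℝ) × (Fin d → ℝ)) ℂ,
      (F : (Fin d → ℝ) × (Fin d → ℝ) × (Fin d → ℝ) → ℂ)
        = fun w => b w j * Zinv (w.2.1, w.2.2) j k := by
    intro j k
    obtain ⟨F, hF⟩ := schwartz_mul_temperate
      (SchwartzMap.postcompCLM (𝕜 := ℝ)
        (ContinuousLinearMap.proj (R := ℝ) (φ := fun _ : Fin d => ℂ) j) b)
      ((hZinvTemp j k).comp hp)
    exact ⟨F, funext fun w => hF w⟩
  choose F hF using hF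
  -- the two sides as finite sums
  have hL : ∀ w, (∑ j, b w j * (((x j : ℝ) : ℂ) - ((Q (w.2.1, w.2.2) j : ℝ) : ℂ)))
          * Complex.exp (Complex.I * FGAphase d x S Q P w / (ε : ℂ))
      = (ε : ℂ) * ∑ j, ∑ k, (F j k w * fderiv ℝ ψ w (0, Pi.single k 1, 0) * Complex.exp (ψ w)
        - Complex.I * (F j k w * fderiv ℝ ψ w (0, 0, Pi.single k 1) * Complex.exp (ψ w))) := by
    intro w
    have e1 : ∀ j k, (F j k w * fderiv ℝ ψ w (0, Pi.single k 1, 0) * Complex.exp (ψ w)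
        - Complex.I * (F j k w * fderiv ℝ ψ w (0, 0, Pi.single k 1) * Complex.exp (ψ w)))
        = F j k w * dz3 d k ψ w * Complex.exp (ψ w) := by
      intro j k; unfold dz3; ring
    simp only [e1, ← Finset.sum_mul]
    rw [← mul_assoc]
    congr 1
    rw [Finset.mul_sum]
    refine Finset.sum_congr rfl fun j _ => ?_
    have hZ : ∀ i, ∑ k, Zinv (w.2.1, w.2.2) j k * Zentry d Q P (w.2.1, w.2.2) k i
        = if j = i then 1 else 0 := by
      intro i
      have := congrFun (congrFun (hZinvL (w.2.1, w.2.2)) j) i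
      rw [Matrix.mul_apply, Matrix.one_apply] at this
      exact this
    calc b w j * (((x j : ℝ) : ℂ) - ((Q (w.2.1, w.2.2) j : ℝ) : ℂ))
        = b w j * ∑ i, (∑ k, Zinv (w.2.1, w.2.2) j k * Zentry d Q P (w.2.1, w.2.2) k i)
            * (((x i : ℝ) : ℂ) - ((Q (w.2.1, w.2.2) i : ℝ) : ℂ)) := by
          simp [hZ]
      _ = b w j * ∑ k, Zinv (w.2.1, w.2.2) j k * ∑ i, Zentry d Q P (w.2.1, w.2.2) k i
            * (((x i : ℝ) : ℂ) - ((Q (w.2.1, w.2.2) i : ℝ) : ℂ)) := by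
          simp only [Finset.sum_mul, Finset.mul_sum]
          rw [Finset.sum_comm]
          simp only [mul_assoc]
      _ = _ := by
          simp only [hdz, hF]
          rw [Finset.mul_sum, Finset.mul_sum]
          refine Finset.sum_congr rfl fun k _ => ?_
          field_simp
  have hR : ∀ w, (∑ j, ∑ k, dz3 d k (fun w' => b w' j * Zinv (w'.2.1, w'.2.2) j k) w)
          * Complex.exp (Complex.I * FGAphase d x S Q P w / (ε : ℂ))
      = ∑ j, ∑ k, (fderiv ℝ (F j k) w (0, Pi.single k 1, 0) * Complex.exp (ψ w)
        - Complex.I * (fderiv ℝ (F j k) w (0, 0, Pi.single k 1) * Complex.exp (ψ w))) := by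
    intro w
    simp only [← hF, Finset.sum_mul]
    refine Finset.sum_congr rfl fun j _ => Finset.sum_congr rfl fun k _ => ?_
    unfold dz3
    simp only [ψ]
    ring
  have i1 : (volume : Measure ((Fin d → ℝ) × (Fin d → ℝ))).IsAddHaarMeasure :=
    Measure.prod.instIsAddHaarMeasure _ _
  have i2 : (volume : Measure ((Fin d → ℝ) × (Fin d → ℝ) × (Fin d → ℝ))).IsAddHaarMeasure :=
    Measure.prod.instIsAddHaarMeasure _ _
  have iL1 := fun j k v => schwartz_mul_deriv_exp_integrable volume (F j k) hψ hre v
  have iR1 := fun j k v => schwartz_deriv_exp_integrable volume (F j k) hψ hre v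
  have iL := fun j k => (iL1 j k (0, Pi.single k 1, 0)).sub'
    ((iL1 j k (0, 0, Pi.single k 1)).const_mul Complex.I)
  have iR := fun j k => (iR1 j k (0, Pi.single k 1, 0)).sub'
    ((iR1 j k (0, 0, Pi.single k 1)).const_mul Complex.I)
  simp only [hL, hR]
  refine ⟨?_, ?_, ?_⟩
  · exact (integrable_finsetSum _ fun j _ => integrable_finsetSum _ fun k _ => iL j k).const_mul _
  · exact integrable_finsetSum _ fun j _ => integrable_finsetSum _ fun k _ => iR j k
  · rw [integral_const_mul, neg_mul, ← mul_neg]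
    congr 1
    rw [integral_finsetSum _ fun j _ => integrable_finsetSum _ fun k _ => iL j k,
      integral_finsetSum _ fun j _ => integrable_finsetSum _ fun k _ => iR j k,
      ← Finset.sum_neg_distrib]
    refine Finset.sum_congr rfl fun j _ => ?_
    rw [integral_finsetSum _ fun k _ => iL j k, integral_finsetSum _ fun k _ => iR j k,
      ← Finset.sum_neg_distrib]
    refine Finset.sum_congr rfl fun k _ => ?_
    rw [integral_sub (iL1 j k _) ((iL1 j k _).const_mul Complex.I),
      integral_sub (iR1 j k _) ((iR1 j k _).const_mul Complex.I),
      integral_const_mul, integral_const_mul, schwartz_exp_ibp volume (F j k) hψ hre,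
      schwartz_exp_ibp volume (F j k) hψ hre]
    ring
end
end

section
/- Let A_1, …, A_d : ℝ^d → ℝ^{M×M} be smooth matrix-valued functions, and let U ⊆ ℝ^d × ℝ^d be open. Suppose H : U → ℝ and R, L : U → ℝ^M are smooth and satisfy, for all (q,p) ∈ U: Σ_{l=1}^d p_l A_l(q) R(q,p) = H(q,p) R(q,p), Σ_{l=1}^d p_l L(q,p)ᵀ A_l(q) = H(q,p) L(q,p)ᵀ, and L(q,p)ᵀ R(q,p) = 1. Define for each j = 1,…,d the ℂ^M-valued function F_j(q,p) = −( (A_j(q) − ∂_{p_j} H(q,p) I_M) + i ( ∂_{q_j} H(q,p) I_M − Σ_{l=1}^d p_l (∂_{q_j} A_l)(q) ) ) R(q,p). Then L(q,p)ᵀ F_j(q,p) = 0 for every j and all (q,p) ∈ U. -/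
open Matrix

noncomputable section

theorem key_aux (d M : ℕ)
    (A : Fin d → (Fin d → ℝ) → Matrix (Fin M) (Fin M) ℝ)
    (hA : ∀ l i j, ContDiff ℝ (⊤ : ℕ∞) (fun q => A l q i j))
    (U : Set ((Fin d → ℝ) × (Fin d → ℝ))) (hU : IsOpen U)
    (H : (Fin d → ℝ) × (Fin d → ℝ) → ℝ)
    (R L : (Fin d → ℝ) × (Fin d → ℝ) → Fin M → ℝ)
    (hH : ContDiffOn ℝ (⊤ : ℕ∞) H U) (hR : ContDiffOn ℝ (⊤ : ℕ∞) R U)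
    (hRight : ∀ w ∈ U, (∑ l, w.2 l • A l w.1) *ᵥ R w = H w • R w)
    (hLeft : ∀ w ∈ U, L w ᵥ* (∑ l, w.2 l • A l w.1) = H w • L w)
    (hNorm : ∀ w ∈ U, L w ⬝ᵥ R w = 1) (w : (Fin d → ℝ) × (Fin d → ℝ)) (hw : w ∈ U)
    (v : (Fin d → ℝ) × (Fin d → ℝ)) :
    L w ⬝ᵥ ((Matrix.of fun i k => ∑ l, (v.2 l * A l w.1 i k +
      w.2 l * fderiv ℝ (fun q => A l q i k) w.1 v.1)) *ᵥ R w) = fderiv ℝ H w v := by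
  have hn : U ∈ nhds w := hU.mem_nhds hw
  have dH : HasFDerivAt H (fderiv ℝ H w) w :=
    ((hH.contDiffAt hn).differentiableAt (by simp)).hasFDerivAt
  have dR : HasFDerivAt R (fderiv ℝ R w) w :=
    ((hR.contDiffAt hn).differentiableAt (by simp)).hasFDerivAt
  have dRi : ∀ i, HasFDerivAt (fun w => R w i)
      ((ContinuousLinearMap.proj (R := ℝ) (φ := fun _ : Fin M => ℝ) i).comp (fderiv ℝ R w)) w :=
    fun i => (hasFDerivAt_pi'.1 dR) i
  have dA : ∀ l i k, HasFDerivAt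
      (fun w : (Fin d → ℝ) × (Fin d → ℝ) => A l w.1 i k)
      ((fderiv ℝ (fun q => A l q i k) w.1).comp (ContinuousLinearMap.fst ℝ _ _)) w := by
    intro l i k
    have h1 : HasFDerivAt (fun q => A l q i k) (fderiv ℝ (fun q => A l q i k) w.1) w.1 :=
      ((hA l i k).contDiffAt.differentiableAt (by simp)).hasFDerivAt
    exact h1.comp w hasFDerivAt_fst
  have dp : ∀ l, HasFDerivAt (fun w : (Fin d → ℝ) × (Fin d → ℝ) => w.2 l)
      ((ContinuousLinearMap.proj (R := ℝ) (φ := fun _ : Fin d => ℝ) l).comp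
        (ContinuousLinearMap.snd ℝ (Fin d → ℝ) (Fin d → ℝ))) w :=
    fun l => (hasFDerivAt_pi'.1 (hasFDerivAt_snd (𝕜 := ℝ) (p := w))) l
  have e : ∀ i, ∑ k, ((∑ l, w.2 l * A l w.1 i k) * fderiv ℝ R w v k
      + R w k * ∑ l, (w.2 l * fderiv ℝ (fun q => A l q i k) w.1 v.1 + A l w.1 i k * v.2 l))
      = H w * fderiv ℝ R w v i + R w i * fderiv ℝ H w v := by
    intro i
    have h1 := HasFDerivAt.fun_sum (u := Finset.univ) fun k _ => 
      (HasFDerivAt.fun_sum (u := Finset.univ) fun l _ => (dp l).mul (dA l i k)).mul (dRi k)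
    have h2 := dH.mul (dRi i)
    have h3 := h2.congr_of_eventuallyEq (Filter.eventually_of_mem hn (fun x hx => by
      have := congrFun (hRight x hx) i
      simp only [mulVec, dotProduct, Matrix.sum_apply, Matrix.smul_apply, Pi.smul_apply,
        smul_eq_mul] at this
      exact this))
    have h4 := DFunLike.congr_fun (h1.unique h3) v
    simpa [ContinuousLinearMap.sum_apply] using h4
  have eL := hLeft w hw
  have eV : (∑ l, w.2 l • A l w.1) *ᵥ (fderiv ℝ R w v) +
      ((Matrix.of fun i k => ∑ l, (v.2 l * A l w.1 i k +
      w.2 l * fderiv ℝ (fun q => A l q i k) w.1 v.1)) *ᵥ R w)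
      = H w • fderiv ℝ R w v + fderiv ℝ H w v • R w := by
    funext i
    have := e i
    simp only [Pi.add_apply, mulVec, dotProduct, Matrix.sum_apply, Matrix.smul_apply,
      Pi.smul_apply, smul_eq_mul, Matrix.of_apply]
    rw [mul_comm (fderiv ℝ H w v), ← this, ← Finset.sum_add_distrib]
    refine Finset.sum_congr rfl fun k _ => ?_
    rw [mul_comm (R w k)]
    congr 2
    refine Finset.sum_congr rfl fun l _ => ?_
    ring
  have := congrArg (fun x => L w ⬝ᵥ x) eV
  simp only [dotProduct_add, dotProduct_mulVec _ (∑ l, w.2 l • A l w.1), eL, dotProduct_smul,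
    smul_dotProduct, hNorm w hw, smul_eq_mul, mul_one] at this
  linarith

/-- the solvability condition `Lᵀ F_j = 0` for
`F_j = −((A_j − ∂_{p_j}H) + i(∂_{q_j}H − Σ_l p_l ∂_{q_j}A_l)) R`,
for a smooth eigenvalue `H` of `Σ_l p_l A_l(q)` with biorthonormal eigenvectors `L, R`. -/
theorem stmt_12 (d M : ℕ)
    (A : Fin d → (Fin d → ℝ) → Matrix (Fin M) (Fin M) ℝ)
    (hA : ∀ l i j, ContDiff ℝ (⊤ : ℕ∞) (fun q => A l q i j))
    (U : Set ((Fin d → ℝ) × (Fin d → ℝ))) (hU : IsOpen U)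
    (H : (Fin d → ℝ) × (Fin d → ℝ) → ℝ)
    (R L : (Fin d → ℝ) × (Fin d → ℝ) → Fin M → ℝ)
    (hH : ContDiffOn ℝ (⊤ : ℕ∞) H U) (hR : ContDiffOn ℝ (⊤ : ℕ∞) R U) (hL : ContDiffOn ℝ (⊤ : ℕ∞) L U)
    (hRight : ∀ w ∈ U, (∑ l, w.2 l • A l w.1) *ᵥ R w = H w • R w)
    (hLeft : ∀ w ∈ U, L w ᵥ* (∑ l, w.2 l • A l w.1) = H w • L w)
    (hNorm : ∀ w ∈ U, L w ⬝ᵥ R w = 1) :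
    ∀ j : Fin d, ∀ w ∈ U,
      ∑ i, ((L w i : ℝ) : ℂ) *
        (-((((A j w.1 *ᵥ R w) i : ℝ) : ℂ)
            - ((fderiv ℝ H w (0, Pi.single j 1) : ℝ) : ℂ) * ((R w i : ℝ) : ℂ)
          + Complex.I * (((fderiv ℝ H w (Pi.single j 1, 0) : ℝ) : ℂ) * ((R w i : ℝ) : ℂ)
            - ∑ l, ((w.2 l : ℝ) : ℂ) *
              ((((Matrix.of fun i' k => fderiv ℝ (fun q => A l q i' k) w.1 (Pi.single j 1))
                  *ᵥ R w) i : ℝ) : ℂ)))) = 0 := by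
  intro j w hw
  have hp := key_aux d M A hA U hU H R L hH hR hRight hLeft hNorm w hw (0, Pi.single j 1)
  have hq := key_aux d M A hA U hU H R L hH hR hRight hLeft hNorm w hw (Pi.single j 1, 0)
  have hN := hNorm w hw
  have ep : (Matrix.of fun i k => ∑ l, ((Pi.single j 1 : Fin d → ℝ) l * A l w.1 i k +
      w.2 l * fderiv ℝ (fun q => A l q i k) w.1 0)) = A j w.1 := by
    ext i k
    simp [Pi.single_apply]
  have eq : (Matrix.of fun i k => ∑ l, ((0 : Fin d → ℝ) l * A l w.1 i k +
      w.2 l * fderiv ℝ (fun q => A l q i k) w.1 (Pi.single j 1))) =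
      ∑ l, w.2 l • (Matrix.of fun i' k => fderiv ℝ (fun q => A l q i' k) w.1 (Pi.single j 1)) := by
    ext i k
    simp [Matrix.sum_apply]
  simp only [ep] at hp
  simp only [eq, Matrix.sum_mulVec, Matrix.smul_mulVec] at hq
  simp only [dotProduct, Finset.sum_apply, Pi.smul_apply, smul_eq_mul] at hp hq hN
  have cp := congrArg (fun x : ℝ => (x : ℂ)) hp
  have cq := congrArg (fun x : ℝ => (x : ℂ)) hq
  have cN := congrArg (fun x : ℝ => (x : ℂ)) hN
  simp only [Complex.ofReal_sum, Complex.ofReal_mul, Complex.ofReal_one] at cp cq cN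
  generalize ((fderiv ℝ H w (0, Pi.single j 1) : ℝ) : ℂ) = a at *
  generalize ((fderiv ℝ H w (Pi.single j 1, 0) : ℝ) : ℂ) = b at *
  have split : ∀ x r y l : ℂ, l * (-(x - a * r + Complex.I * (b * r - y))) =
      -(l * x) + (a - Complex.I * b) * (l * r) + Complex.I * (l * y) := by
    intros; ring
  simp only [split, Finset.sum_add_distrib, ← Finset.mul_sum, Finset.sum_neg_distrib]
  rw [cp, cN]
  simp only [Finset.mul_sum] at cq ⊢
  simp only [← Finset.mul_sum] at cq ⊢
  rw [cq]
  ring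
end
end

section
/- Let d ≥ 1 and r > 0, and let A_0 : ℝ^d → ℂ and S_0 : ℝ^d → ℝ be smooth and compactly supported. For ε > 0 define ψ_0(q,p) = ∫_{ℝ^d} e^{−|y−q|²/(2ε)} e^{i(−p·(y−q) + r S_0(y))/ε} A_0(y) dy. Then for every positive integer N there exists a constant C > 0, depending only on N, d, r, A_0, S_0, such that for all ε ∈ (0,1] and all (q,p) ∈ ℝ^d × ℝ^d with p ≠ r ∇S_0(q): |ψ_0(q,p)| ≤ C ε^{(N+1)/2} / |p − r ∇S_0(q)|^N. -/
open MeasureTheory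

noncomputable section

namespace WP

abbrev Fam (d : ℕ) := Set.Ioc (0 : ℝ) 1 → (Fin d → ℝ) → (Fin d → ℝ) → ℂ

def Gr {d : ℕ} (B : Fam d) : Prop :=
  ∃ C : ℝ, 0 ≤ C ∧ ∃ m : ℕ, ∀ h q y, ‖B h q y‖ ≤ C * (1 + ‖y - q‖ / (h : ℝ)) ^ m

def DD {d : ℕ} (i : Fin d) (B : Fam d) : Fam d :=
  fun h q y => ((h : ℝ) : ℂ) * fderiv ℝ (B h q) y (Pi.single i 1)

def Sm {d : ℕ} (B : Fam d) : Prop := ∀ h q, ContDiff ℝ (⊤ : ℕ∞) (B h q)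

def Sy {d : ℕ} (i : Fin d) : ℕ → Fam d → Prop
  | 0, B => Gr B
  | k + 1, B => Gr B ∧ Sy i k (DD i B)

lemma one_le_w {d : ℕ} (h : Set.Ioc (0 : ℝ) 1) (q y : Fin d → ℝ) :
    1 ≤ 1 + ‖y - q‖ / (h : ℝ) := by
  have := h.2.1
  have : 0 ≤ ‖y - q‖ / (h : ℝ) := by positivity
  linarith

lemma Gr.add {d : ℕ} {B B' : Fam d} (hB : Gr B) (hB' : Gr B') : Gr (B + B') := by
  obtain ⟨C, hC, m, h1⟩ := hB
  obtain ⟨C', hC', m', h2⟩ := hB'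
  refine ⟨C + C', by positivity, m + m', fun h q y => ?_⟩
  have hw := one_le_w h q y
  have e1 : (1 + ‖y - q‖ / (h : ℝ)) ^ m ≤ (1 + ‖y - q‖ / (h : ℝ)) ^ (m + m') :=
    pow_le_pow_right₀ hw (by omega)
  have e2 : (1 + ‖y - q‖ / (h : ℝ)) ^ m' ≤ (1 + ‖y - q‖ / (h : ℝ)) ^ (m + m') :=
    pow_le_pow_right₀ hw (by omega)
  calc ‖(B + B') h q y‖ ≤ ‖B h q y‖ + ‖B' h q y‖ := norm_add_le _ _
    _ ≤ C * (1 + ‖y - q‖ / (h : ℝ)) ^ m + C' * (1 + ‖y - q‖ / (h : ℝ)) ^ m' :=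
        add_le_add (h1 h q y) (h2 h q y)
    _ ≤ C * (1 + ‖y - q‖ / (h : ℝ)) ^ (m + m') + C' * (1 + ‖y - q‖ / (h : ℝ)) ^ (m + m') := by
        gcongr
    _ = _ := by ring

lemma Gr.mul {d : ℕ} {B B' : Fam d} (hB : Gr B) (hB' : Gr B') : Gr (B * B') := by
  obtain ⟨C, hC, m, h1⟩ := hB
  obtain ⟨C', hC', m', h2⟩ := hB'
  refine ⟨C * C', by positivity, m + m', fun h q y => ?_⟩
  have hw := one_le_w h q y
  calc ‖(B * B') h q y‖ = ‖B h q y‖ * ‖B' h q y‖ := norm_mul _ _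
    _ ≤ (C * (1 + ‖y - q‖ / (h : ℝ)) ^ m) * (C' * (1 + ‖y - q‖ / (h : ℝ)) ^ m') :=
        mul_le_mul (h1 h q y) (h2 h q y) (norm_nonneg _) (by positivity)
    _ = _ := by rw [pow_add]; ring

lemma Sm.diff {d : ℕ} {B : Fam d} (hB : Sm B) (h q) : Differentiable ℝ (B h q) :=
  (hB h q).differentiable (by simp)

lemma Sm.add {d : ℕ} {B B' : Fam d} (hB : Sm B) (hB' : Sm B') : Sm (B + B') :=
  fun h q => (hB h q).add (hB' h q)

lemma Sm.mul {d : ℕ} {B B' : Fam d} (hB : Sm B) (hB' : Sm B') : Sm (B * B') :=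
  fun h q => (hB h q).mul (hB' h q)

lemma smooth_dir {d : ℕ} {F : Type*} [NormedAddCommGroup F] [NormedSpace ℝ F]
    {f : (Fin d → ℝ) → F} (hf : ContDiff ℝ (⊤ : ℕ∞) f) (v : Fin d → ℝ) :
    ContDiff ℝ (⊤ : ℕ∞) (fun y => fderiv ℝ f y v) :=
  (hf.fderiv_right (m := (⊤ : ℕ∞)) (by simp)).clm_apply contDiff_const

lemma Sm.dd {d : ℕ} {B : Fam d} (hB : Sm B) (i : Fin d) : Sm (DD i B) :=
  fun h q => contDiff_const.mul (smooth_dir (hB h q) _)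

lemma DD_add {d : ℕ} {B B' : Fam d} (hB : Sm B) (hB' : Sm B') (i : Fin d) :
    DD i (B + B') = DD i B + DD i B' := by
  funext h q y
  have : fderiv ℝ ((B + B') h q) y = fderiv ℝ (B h q) y + fderiv ℝ (B' h q) y :=
    fderiv_add (hB.diff h q y) (hB'.diff h q y)
  change _ * fderiv ℝ ((B + B') h q) y _ = DD i B h q y + DD i B' h q y
  rw [this]
  simp [DD, mul_add]

lemma DD_mul {d : ℕ} {B B' : Fam d} (hB : Sm B) (hB' : Sm B') (i : Fin d) :
    DD i (B * B') = B * DD i B' + DD i B * B' := by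
  funext h q y
  have : fderiv ℝ ((B * B') h q) y = B h q y • fderiv ℝ (B' h q) y + B' h q y • fderiv ℝ (B h q) y :=
    fderiv_mul (hB.diff h q y) (hB'.diff h q y)
  change _ * fderiv ℝ ((B * B') h q) y _ = B h q y * DD i B' h q y + DD i B h q y * B' h q y
  rw [this]
  simp [DD]
  ring

lemma Sy.gr {d : ℕ} {i : Fin d} {k : ℕ} {B : Fam d} (h : Sy i k B) : Gr B := by
  cases k with
  | zero => exact h
  | succ k => exact h.1

lemma Sy.pred {d : ℕ} {i : Fin d} {k : ℕ} : ∀ {B : Fam d}, Sy i (k + 1) B → Sy i k B := by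
  induction k with
  | zero => exact fun h => h.1
  | succ k ih => exact fun h => ⟨h.1, ih h.2⟩

lemma Sy.add {d : ℕ} {i : Fin d} {k : ℕ} : ∀ {B B' : Fam d}, Sm B → Sm B' →
    Sy i k B → Sy i k B' → Sy i k (B + B') := by
  induction k with
  | zero => exact fun _ _ h h' => Gr.add h h'
  | succ k ih =>
    intro B B' s s' h h'
    refine ⟨h.1.add h'.1, ?_⟩
    rw [DD_add s s']
    exact ih (s.dd i) (s'.dd i) h.2 h'.2

lemma Sy.mul {d : ℕ} {i : Fin d} {k : ℕ} : ∀ {B B' : Fam d}, Sm B → Sm B' →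
    Sy i k B → Sy i k B' → Sy i k (B * B') := by
  induction k with
  | zero => exact fun _ _ h h' => Gr.mul h h'
  | succ k ih =>
    intro B B' s s' h h'
    refine ⟨h.1.mul h'.1, ?_⟩
    rw [DD_mul s s']
    exact Sy.add (s.mul (s'.dd i)) ((s.dd i).mul s') (ih s (s'.dd i) h.pred h'.2)
      (ih (s.dd i) s' h.2 h'.pred)

lemma Sy.scale {d : ℕ} {i : Fin d} {k : ℕ} : ∀ (j : ℕ) {a : (Fin d → ℝ) → ℂ},
    ContDiff ℝ (⊤ : ℕ∞) a → (∃ c, HasCompactSupport (fun y => a y - c)) →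
    Sy i k (fun h _ y => ((h : ℝ) : ℂ) ^ j * a y) := by
  have key : ∀ (j : ℕ) {a : (Fin d → ℝ) → ℂ},
    ContDiff ℝ (⊤ : ℕ∞) a → (∃ c, HasCompactSupport (fun y => a y - c)) →
    Gr (fun h _ y => ((h : ℝ) : ℂ) ^ j * a y) := by
    intro j a ha ⟨c, hc⟩
    obtain ⟨C, hC⟩ := hc.exists_bound_of_continuous (ha.continuous.sub continuous_const)
    refine ⟨C + ‖c‖, ?_, 0, fun h q y => ?_⟩
    · have := (norm_nonneg _).trans (hC 0)
      positivity
    · have h1 : ‖a y‖ ≤ C + ‖c‖ := by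
        have := norm_add_le (a y - c) c
        simp only [sub_add_cancel] at this
        linarith [hC y]
      have h2 : (h : ℝ) ^ j ≤ 1 := pow_le_one₀ h.2.1.le h.2.2
      have h3 : 0 ≤ (h : ℝ) := h.2.1.le
      rw [norm_mul, norm_pow, Complex.norm_real, Real.norm_of_nonneg h3, pow_zero, mul_one]
      nlinarith [norm_nonneg (a y), pow_nonneg h3 j]
  induction k with
  | zero => exact fun j a ha ⟨c, hc⟩ => key j ha ⟨c, hc⟩
  | succ k ih =>
    intro j a ha ⟨c, hc⟩
    refine ⟨key j ha ⟨c, hc⟩, ?_⟩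
    have : DD i (fun h _ y => ((h : ℝ) : ℂ) ^ j * a y) =
        (fun (h : Set.Ioc (0 : ℝ) 1) _ y => ((h : ℝ) : ℂ) ^ (j + 1) * fderiv ℝ a y (Pi.single i 1)) := by
      funext h q y
      have := fderiv_const_mul (ha.differentiable (by simp) y) (((h : ℝ) : ℂ) ^ j)
      simp only [DD]
      rw [this]
      simp
      ring
    rw [this]
    refine ih (j + 1) (smooth_dir ha _) ⟨0, ?_⟩
    have := (hc).fderiv_apply (𝕜 := ℝ) (Pi.single i 1)
    simpa [fderiv_sub_const] using this

/-- the derivative of the phase, recentred -/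
def gg {d : ℕ} (i : Fin d) (r : ℝ) (T : (Fin d → ℝ) → ℝ) : Fam d := fun h q y =>
  ((h : ℝ) : ℂ)⁻¹ * (-((y i - q i : ℝ) : ℂ) + Complex.I * (r : ℂ) * ((T y - T q : ℝ) : ℂ))

lemma gg_sm {d : ℕ} (i : Fin d) (r : ℝ) {T : (Fin d → ℝ) → ℝ} (hT : ContDiff ℝ (⊤ : ℕ∞) T) :
    Sm (gg i r T) := by
  intro h q
  have h1 : ContDiff ℝ (⊤ : ℕ∞) (fun y : Fin d → ℝ => ((y i - q i : ℝ) : ℂ)) :=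
    Complex.ofRealCLM.contDiff.comp ((contDiff_apply ℝ ℝ i).sub contDiff_const)
  have h2 : ContDiff ℝ (⊤ : ℕ∞) (fun y : Fin d → ℝ => ((T y - T q : ℝ) : ℂ)) :=
    Complex.ofRealCLM.contDiff.comp (hT.sub contDiff_const)
  exact contDiff_const.mul (h1.neg.add (contDiff_const.mul h2))

lemma gg_gr {d : ℕ} (i : Fin d) (r : ℝ) {T : (Fin d → ℝ) → ℝ} (hT : ContDiff ℝ (⊤ : ℕ∞) T)
    (hTc : HasCompactSupport T) : Gr (gg i r T) := by
  obtain ⟨K, hK⟩ := hT.lipschitzWith_of_hasCompactSupport hTc (by simp)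
  refine ⟨1 + |r| * K, by positivity, 1, fun h q y => ?_⟩
  have hh := h.2.1
  have h1 : |y i - q i| ≤ ‖y - q‖ := norm_le_pi_norm (y - q) i
  have h2 : |T y - T q| ≤ K * ‖y - q‖ := by
    have := hK.dist_le_mul y q
    rwa [dist_eq_norm, dist_eq_norm] at this
  have h3 : ‖gg i r T h q y‖ ≤ (h : ℝ)⁻¹ * (|y i - q i| + |r| * |T y - T q|) := by
    unfold gg
    rw [norm_mul, norm_inv, Complex.norm_real, Real.norm_of_nonneg hh.le]
    gcongr
    refine (norm_add_le _ _).trans (le_of_eq ?_)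
    rw [norm_neg, norm_mul, norm_mul, Complex.norm_I, Complex.norm_real, Complex.norm_real,
      Complex.norm_real]
    simp
  calc _ ≤ (h : ℝ)⁻¹ * (‖y - q‖ + |r| * (K * ‖y - q‖)) := h3.trans (by gcongr)
    _ = (1 + |r| * K) * (‖y - q‖ / h) := by field_simp
    _ ≤ _ := by
      rw [pow_one]
      gcongr
      linarith

lemma gg_sy {d : ℕ} (i : Fin d) (r : ℝ) {T : (Fin d → ℝ) → ℝ} (hT : ContDiff ℝ (⊤ : ℕ∞) T)
    (hTc : HasCompactSupport T) (k : ℕ) : Sy i k (gg i r T) := by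
  cases k with
  | zero => exact gg_gr i r hT hTc
  | succ k =>
    refine ⟨gg_gr i r hT hTc, ?_⟩
    have : DD i (gg i r T) = (fun (h : Set.Ioc (0 : ℝ) 1) _ y => ((h : ℝ) : ℂ) ^ 0 *
        (-1 + Complex.I * (r : ℂ) * ((fderiv ℝ T y (Pi.single i 1) : ℝ) : ℂ))) := by
      funext h q y
      have hh : ((h : ℝ) : ℂ) ≠ 0 := by exact_mod_cast h.2.1.ne'
      have h1 : HasFDerivAt (fun y : Fin d → ℝ => ((y i - q i : ℝ) : ℂ))
          (Complex.ofRealCLM.comp (ContinuousLinearMap.proj i)) y :=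
        Complex.ofRealCLM.hasFDerivAt.comp y ((hasFDerivAt_apply i y).sub_const (q i))
      have h2 : HasFDerivAt (fun y : Fin d → ℝ => ((T y - T q : ℝ) : ℂ))
          (Complex.ofRealCLM.comp (fderiv ℝ T y)) y :=
        Complex.ofRealCLM.hasFDerivAt.comp y
          (((hT.differentiable (by simp) y).hasFDerivAt).sub_const (T q))
      have h3 := (h1.fun_neg.fun_add (h2.const_mul (Complex.I * (r : ℂ)))).const_mul
        (((h : ℝ) : ℂ)⁻¹)
      have h4 : fderiv ℝ (gg i r T h q) y = _ := h3.fderiv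
      simp only [DD]
      rw [h4]
      simp
      field_simp
    rw [this]
    have hT1 := smooth_dir hT (Pi.single i 1)
    refine Sy.scale 0 ?_ ⟨-1, ?_⟩
    · exact contDiff_const.add (contDiff_const.mul (Complex.ofRealCLM.contDiff.comp hT1))
    · have := hTc.fderiv_apply (𝕜 := ℝ) (Pi.single i 1)
      have h2 := this.comp_left (g := fun t : ℝ => Complex.I * (r : ℂ) * (t : ℂ)) (by simp)
      convert h2 using 2
      simp

/-- the full oscillating Gaussian -/
def EE {d : ℕ} (r : ℝ) (S0 : (Fin d → ℝ) → ℝ) (ε : ℝ) (q p y : Fin d → ℝ) : ℂ :=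
  Complex.exp (-((∑ i, (y i - q i) ^ 2 : ℝ) : ℂ) / (2 * (ε : ℂ)))
            * Complex.exp (Complex.I *
                (((-(∑ i, p i * (y i - q i)) + r * S0 y : ℝ)) : ℂ) / (ε : ℂ))

lemma EE_smooth {d : ℕ} (r : ℝ) {S0 : (Fin d → ℝ) → ℝ} (hS : ContDiff ℝ (⊤ : ℕ∞) S0) (ε : ℝ)
    (q p : Fin d → ℝ) : ContDiff ℝ (⊤ : ℕ∞) (EE r S0 ε q p) := by
  unfold EE
  have h1 : ContDiff ℝ (⊤ : ℕ∞) (fun y : Fin d → ℝ => ((∑ i, (y i - q i) ^ 2 : ℝ) : ℂ)) :=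
    Complex.ofRealCLM.contDiff.comp
      (ContDiff.sum (s := Finset.univ) fun j _ => ((contDiff_apply ℝ ℝ j).sub contDiff_const).pow 2)
  have h2 : ContDiff ℝ (⊤ : ℕ∞) (fun y : Fin d → ℝ =>
      ((-(∑ i, p i * (y i - q i)) + r * S0 y : ℝ) : ℂ)) :=
    Complex.ofRealCLM.contDiff.comp
      ((ContDiff.sum (s := Finset.univ) fun j _ => contDiff_const.mul
        ((contDiff_apply ℝ ℝ j).sub contDiff_const)).neg.add (contDiff_const.mul hS))
  exact ((h1.neg.div_const _).cexp).mul (((contDiff_const.mul h2).div_const _).cexp)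

lemma EE_deriv {d : ℕ} (i : Fin d) (r : ℝ) {S0 : (Fin d → ℝ) → ℝ} (hS : ContDiff ℝ (⊤ : ℕ∞) S0)
    (h : Set.Ioc (0 : ℝ) 1) (q p y : Fin d → ℝ) :
    ((h : ℝ) : ℂ) * fderiv ℝ (EE r S0 ((h : ℝ) ^ 2) q p) y (Pi.single i 1) =
      EE r S0 ((h : ℝ) ^ 2) q p y * (gg i r (fun y => fderiv ℝ S0 y (Pi.single i 1)) h q y
        - ((h : ℝ) : ℂ)⁻¹ * Complex.I * ((p i - r * fderiv ℝ S0 q (Pi.single i 1) : ℝ) : ℂ)) := by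
  have hh : ((h : ℝ) : ℂ) ≠ 0 := by exact_mod_cast h.2.1.ne'
  have a1 : HasFDerivAt (fun y : Fin d → ℝ => (∑ i, (y i - q i) ^ 2 : ℝ)) _ y :=
    HasFDerivAt.fun_sum (u := Finset.univ) fun j _ =>
      ((hasFDerivAt_apply (𝕜 := ℝ) j y).sub_const (q j)).pow 2
  have a2 : HasFDerivAt (fun y : Fin d → ℝ => (∑ i, p i * (y i - q i) : ℝ)) _ y :=
    HasFDerivAt.fun_sum (u := Finset.univ) fun j _ =>
      ((hasFDerivAt_apply (𝕜 := ℝ) j y).sub_const (q j)).const_mul (p j)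
  have a3 := a2.fun_neg.fun_add ((hS.differentiable (by simp) y).hasFDerivAt.const_mul r)
  have b1 : HasFDerivAt (fun y : Fin d → ℝ => ((∑ i, (y i - q i) ^ 2 : ℝ) : ℂ)) _ y :=
    Complex.ofRealCLM.hasFDerivAt.comp y a1
  have b2 : HasFDerivAt (fun y : Fin d → ℝ =>
      ((-(∑ i, p i * (y i - q i)) + r * S0 y : ℝ) : ℂ)) _ y :=
    Complex.ofRealCLM.hasFDerivAt.comp y a3
  have c := ((b1.fun_neg.mul_const (2 * (((h : ℝ) ^ 2 : ℝ) : ℂ))⁻¹).cexp).mul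
    (((b2.const_mul Complex.I).mul_const ((((h : ℝ) ^ 2 : ℝ) : ℂ))⁻¹).cexp)
  have e : fderiv ℝ (EE r S0 ((h : ℝ) ^ 2) q p) y = _ := c.fderiv
  rw [e]
  simp only [EE, gg, div_eq_mul_inv]
  simp [Pi.single_apply]
  field_simp
  ring

lemma EE_norm {d : ℕ} (r : ℝ) (S0 : (Fin d → ℝ) → ℝ) (h : Set.Ioc (0 : ℝ) 1)
    (q p y : Fin d → ℝ) :
    ‖EE r S0 ((h : ℝ) ^ 2) q p y‖ ≤ Real.exp (-(‖y - q‖ / h) ^ 2 / 2) := by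
  have hh := h.2.1
  unfold EE
  have e1 : -((∑ i, (y i - q i) ^ 2 : ℝ) : ℂ) / (2 * (((h : ℝ) ^ 2 : ℝ) : ℂ)) =
    ((-(∑ i, (y i - q i) ^ 2) / (2 * (h : ℝ) ^ 2) : ℝ) : ℂ) := by push_cast; ring
  have e2 : Complex.I * (((-(∑ i, p i * (y i - q i)) + r * S0 y : ℝ)) : ℂ) /
      (((h : ℝ) ^ 2 : ℝ) : ℂ) =
    (((-(∑ i, p i * (y i - q i)) + r * S0 y) / (h : ℝ) ^ 2 : ℝ) : ℂ) * Complex.I := by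
    push_cast; ring
  rw [e1, e2, norm_mul, Complex.norm_exp_ofReal_mul_I, mul_one, Complex.norm_exp,
    Complex.ofReal_re, Real.exp_le_exp]
  have h1 : ‖y - q‖ ^ 2 ≤ ∑ i, (y i - q i) ^ 2 := by
    have : ‖y - q‖ ≤ Real.sqrt (∑ i, (y i - q i) ^ 2) := by
      refine (pi_norm_le_iff_of_nonneg (Real.sqrt_nonneg _)).2 fun i => ?_
      apply Real.le_sqrt_of_sq_le
      rw [Real.norm_eq_abs, sq_abs]
      exact Finset.single_le_sum (f := fun i => (y i - q i) ^ 2)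
        (fun _ _ => sq_nonneg _) (Finset.mem_univ i)
    calc _ ≤ Real.sqrt (∑ i, (y i - q i) ^ 2) ^ 2 := by gcongr
      _ = _ := Real.sq_sqrt (Finset.sum_nonneg fun _ _ => sq_nonneg _)
  have : -(‖y - q‖ / (h : ℝ)) ^ 2 / 2 = - ‖y - q‖ ^ 2 / (2 * (h : ℝ) ^ 2) := by
    field_simp
  rw [this]
  gcongr

lemma exp_poly (k : ℕ) (t : ℝ) (ht : 0 ≤ t) :
    (1 + t) ^ k * Real.exp (-t ^ 2 / 2) ≤ k.factorial * Real.exp 2 := by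
  have h1 := Real.pow_div_factorial_le_exp (1 + t) (by linarith : 0 ≤ 1 + t) k
  rw [div_le_iff₀ (by positivity)] at h1
  have h2 : Real.exp (1 + t) * Real.exp (-t ^ 2 / 2) ≤ Real.exp 2 := by
    rw [← Real.exp_add, Real.exp_le_exp]
    nlinarith [sq_nonneg (t - 1)]
  calc _ ≤ (Real.exp (1 + t) * k.factorial) * Real.exp (-t ^ 2 / 2) := by gcongr
    _ = k.factorial * (Real.exp (1 + t) * Real.exp (-t ^ 2 / 2)) := by ring
    _ ≤ _ := by gcongr

lemma base {d : ℕ} (r : ℝ) (S0 : (Fin d → ℝ) → ℝ) {B : Fam d} (hB : Gr B) :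
    ∃ C : ℝ, 0 ≤ C ∧ ∀ (h : Set.Ioc (0 : ℝ) 1) (q p : Fin d → ℝ), ‖∫ y, EE r S0 ((h : ℝ) ^ 2) q p y * B h q y‖ ≤ C * (h : ℝ) ^ d := by
  obtain ⟨C, hC, m, hb⟩ := hB
  have hint : Integrable (fun x : Fin d → ℝ => (1 + ‖x‖) ^ (-((d : ℝ) + 1))) :=
    integrable_one_add_norm (by simp)
  set J := ∫ x : Fin d → ℝ, (1 + ‖x‖) ^ (-((d : ℝ) + 1)) with hJ
  set M : ℝ := C * ((m + (d + 1)).factorial * Real.exp 2) with hM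
  have hM0 : 0 ≤ M := by positivity
  have hJ0 : 0 ≤ J := integral_nonneg fun x => by positivity
  refine ⟨M * J, by positivity, fun h q p => ?_⟩
  have hh := h.2.1
  have hpt : ∀ y, ‖EE r S0 ((h : ℝ) ^ 2) q p y * B h q y‖ ≤
      M * (1 + ‖(h : ℝ)⁻¹ • (y - q)‖) ^ (-((d : ℝ) + 1)) := by
    intro y
    have e : ‖(h : ℝ)⁻¹ • (y - q)‖ = ‖y - q‖ / h := by
      rw [norm_smul, norm_inv, Real.norm_of_nonneg hh.le]; ring
    rw [e, norm_mul]
    set t := ‖y - q‖ / (h : ℝ) with htd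
    have ht : 0 ≤ t := by positivity
    have e2 : (1 + t) ^ (-((d : ℝ) + 1)) = ((1 + t) ^ (d + 1))⁻¹ := by
      rw [Real.rpow_neg (by positivity)]
      congr 1
      exact_mod_cast Real.rpow_natCast (1 + t) (d + 1)
    rw [e2, ← div_eq_mul_inv, le_div_iff₀ (by positivity)]
    calc _ ≤ Real.exp (-t ^ 2 / 2) * (C * (1 + t) ^ m) * (1 + t) ^ (d + 1) := by
          gcongr
          · exact EE_norm r S0 h q p y
          · exact hb h q y
      _ = C * ((1 + t) ^ (m + (d + 1)) * Real.exp (-t ^ 2 / 2)) := by rw [pow_add]; ring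
      _ ≤ _ := by
          rw [hM]
          exact mul_le_mul_of_nonneg_left (exp_poly _ t ht) hC
  have hI : Integrable (fun y : Fin d → ℝ =>
      M * (1 + ‖(h : ℝ)⁻¹ • (y - q)‖) ^ (-((d : ℝ) + 1))) := by
    have := (hint.comp_smul (inv_ne_zero hh.ne')).comp_sub_right q
    exact this.const_mul M
  refine (norm_integral_le_of_norm_le hI (Filter.Eventually.of_forall hpt)).trans (le_of_eq ?_)
  rw [integral_const_mul]
  rw [integral_sub_right_eq_self (fun y : Fin d → ℝ => (1 + ‖(h : ℝ)⁻¹ • y‖) ^ (-((d : ℝ) + 1))) q]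
  rw [Measure.integral_comp_inv_smul_of_nonneg volume
    (fun y : Fin d → ℝ => (1 + ‖y‖) ^ (-((d : ℝ) + 1))) hh.le]
  simp [hJ]
  ring

lemma main {d : ℕ} (i : Fin d) (r : ℝ) {S0 : (Fin d → ℝ) → ℝ} (hS : ContDiff ℝ (⊤ : ℕ∞) S0)
    (hSc : HasCompactSupport S0) (N : ℕ) : ∀ {B : Fam d}, Sm B → Sy i N B →
    (∀ h q, HasCompactSupport (B h q)) →
    ∃ C : ℝ, 0 ≤ C ∧ ∀ (h : Set.Ioc (0 : ℝ) 1) (q p : Fin d → ℝ), |p i - r * fderiv ℝ S0 q (Pi.single i 1)| ^ N *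
      ‖∫ y, EE r S0 ((h : ℝ) ^ 2) q p y * B h q y‖ ≤ C * (h : ℝ) ^ (N + d) := by
  induction N with
  | zero =>
    intro B _ h _
    simpa using base r S0 h.gr
  | succ N ih =>
    intro B s hB hc
    set T := fun y => fderiv ℝ S0 y (Pi.single i 1) with hT
    have hTs : ContDiff ℝ (⊤ : ℕ∞) T := smooth_dir hS _
    have hTc : HasCompactSupport T := hSc.fderiv_apply (𝕜 := ℝ) _
    have gs := gg_sm i r hTs
    obtain ⟨C, hC, hb⟩ := ih (B := DD i B + gg i r T * B) ((s.dd i).add (gs.mul s))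
      (Sy.add (s.dd i) (gs.mul s) hB.2 (Sy.mul gs s (gg_sy i r hTs hTc N) hB.pred))
      (fun h q => by
        have h1 : HasCompactSupport (DD i B h q) :=
          ((hc h q).fderiv_apply (𝕜 := ℝ) (Pi.single i 1)).mul_left
        have h2 : HasCompactSupport ((gg i r T * B) h q) := (hc h q).mul_left
        exact h1.add h2)
    refine ⟨C, hC, fun h q p => ?_⟩
    have hh := h.2.1
    have hhc : ((h : ℝ) : ℂ) ≠ 0 := by exact_mod_cast hh.ne'
    set v : ℝ := p i - r * fderiv ℝ S0 q (Pi.single i 1) with hv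
    set E := EE r S0 ((h : ℝ) ^ 2) q p with hE
    have hEs : ContDiff ℝ (⊤ : ℕ∞) E := EE_smooth r hS _ q p
    have hEB : Integrable (fun y => E y * B h q y) :=
      (hEs.continuous.mul (s h q).continuous).integrable_of_hasCompactSupport (hc h q).mul_left
    have hDEB : Integrable (fun y => fderiv ℝ E y (Pi.single i 1) * B h q y) :=
      ((smooth_dir hEs _).continuous.mul (s h q).continuous).integrable_of_hasCompactSupport
        (hc h q).mul_left
    have hEDB : Integrable (fun y => E y * fderiv ℝ (B h q) y (Pi.single i 1)) :=
      (hEs.continuous.mul (smooth_dir (s h q) _).continuous).integrable_of_hasCompactSupport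
        ((hc h q).fderiv_apply (𝕜 := ℝ) (Pi.single i 1)).mul_left
    have ibp := integral_mul_fderiv_eq_neg_fderiv_mul_of_integrable hDEB hEDB hEB
      (fun x _ => hEs.differentiable (by simp) x) (fun x _ => s.diff h q x)
    have key : ∫ y, E y * (DD i B + gg i r T * B) h q y =
        (((h : ℝ) : ℂ)⁻¹ * Complex.I * (v : ℂ)) * ∫ y, E y * B h q y := by
      have pt : ∀ y, E y * (DD i B + gg i r T * B) h q y =
          ((h : ℝ) : ℂ) * (E y * fderiv ℝ (B h q) y (Pi.single i 1)) +
          (((h : ℝ) : ℂ) * (fderiv ℝ E y (Pi.single i 1) * B h q y) +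
          (((h : ℝ) : ℂ)⁻¹ * Complex.I * (v : ℂ)) * (E y * B h q y)) := by
        intro y
        have := EE_deriv i r hS h q p y
        rw [← mul_assoc ((h : ℝ) : ℂ) (fderiv ℝ E y (Pi.single i 1)), this]
        simp only [Pi.add_apply, Pi.mul_apply, DD]
        ring
      simp_rw [pt]
      have i2 : Integrable (fun y => ((h : ℝ) : ℂ) * (fderiv ℝ E y (Pi.single i 1) * B h q y) +
          (((h : ℝ) : ℂ)⁻¹ * Complex.I * (v : ℂ)) * (E y * B h q y)) :=
        (hDEB.const_mul _).add (hEB.const_mul _)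
      rw [integral_add (hEDB.const_mul _) i2, integral_add (hDEB.const_mul _) (hEB.const_mul _), integral_const_mul, integral_const_mul,
        integral_const_mul, ibp]
      ring
    have hb' := hb h q p
    rw [← hE, key, norm_mul, norm_mul, norm_mul, norm_inv, Complex.norm_I, Complex.norm_real,
      Complex.norm_real, Real.norm_of_nonneg hh.le, Real.norm_eq_abs, ← hv] at hb'
    calc |v| ^ (N + 1) * ‖∫ y, E y * B h q y‖
        = h * (|v| ^ N * ((h : ℝ)⁻¹ * 1 * |v| * ‖∫ y, E y * B h q y‖)) := by
          field_simp
          ring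
      _ ≤ h * (C * (h : ℝ) ^ (N + d)) := by gcongr
      _ = _ := by ring

end WP

/-- decay of the Gaussian wave-packet transform of a WKB datum away from the
submanifold `p = r∇S₀(q)`: for each `N ≥ 1` there is `C > 0` with
`|ψ₀(q,p)| ≤ C ε^{(N+1)/2} / |p − r∇S₀(q)|^N` for all `ε ∈ (0,1]`. -/
theorem stmt_14 (d : ℕ) (hd : 1 ≤ d) (r : ℝ) (hr : 0 < r)
    (A0 : (Fin d → ℝ) → ℂ) (S0 : (Fin d → ℝ) → ℝ)
    (hA0 : ContDiff ℝ (⊤ : ℕ∞) A0) (hA0c : HasCompactSupport A0)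
    (hS0 : ContDiff ℝ (⊤ : ℕ∞) S0) (hS0c : HasCompactSupport S0)
    (N : ℕ) (hN : 0 < N) :
    ∃ C > 0, ∀ ε ∈ Set.Ioc (0 : ℝ) 1, ∀ q p : Fin d → ℝ,
      p ≠ (fun i => r * fderiv ℝ S0 q (Pi.single i 1)) →
      norm (E := ℂ) (∫ y : Fin d → ℝ,
          Complex.exp (-((∑ i, (y i - q i) ^ 2 : ℝ) : ℂ) / (2 * (ε : ℂ)))
            * Complex.exp (Complex.I *
                (((-(∑ i, p i * (y i - q i)) + r * S0 y : ℝ)) : ℂ) / (ε : ℂ))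
            * A0 y)
        ≤ C * ε ^ (((N : ℝ) + 1) / 2)
            / Real.sqrt (∑ i, (p i - r * fderiv ℝ S0 q (Pi.single i 1)) ^ 2) ^ N := by
  have hsy : ∀ i : Fin d, WP.Sy i N (fun _ _ y => A0 y) := by
    intro i
    have := WP.Sy.scale (i := i) (k := N) 0 hA0 ⟨0, by simpa using hA0c⟩
    simpa using this
  have hm := fun i : Fin d => WP.main i r hS0 hS0c N (B := fun _ _ y => A0 y)
    (fun _ _ => hA0) (hsy i) (fun _ _ => hA0c)
  choose C hC hb using hm
  have hCs : 0 ≤ ∑ i, C i := Finset.sum_nonneg fun i _ => hC i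
  refine ⟨(d : ℝ) ^ N * (∑ i, C i) + 1, by positivity, fun ε hε q p hp => ?_⟩
  set v : Fin d → ℝ := fun i => p i - r * fderiv ℝ S0 q (Pi.single i 1) with hv
  have hs : 0 < Real.sqrt (∑ i, v i ^ 2) := by
    apply Real.sqrt_pos.2
    obtain ⟨j, hj⟩ := Function.ne_iff.1 hp
    refine Finset.sum_pos' (fun i _ => sq_nonneg _) ⟨j, Finset.mem_univ _, ?_⟩
    have : v j ≠ 0 := sub_ne_zero.2 hj
    positivity
  have hε0 := hε.1
  set h : Set.Ioc (0 : ℝ) 1 := ⟨Real.sqrt ε, Real.sqrt_pos.2 hε.1, Real.sqrt_le_one.2 hε.2⟩ with hhd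
  have hh2 : (h : ℝ) ^ 2 = ε := Real.sq_sqrt hε.1.le
  have hh0 : 0 < (h : ℝ) := h.2.1
  have : Nonempty (Fin d) := ⟨⟨0, hd⟩⟩
  obtain ⟨i, -, hi⟩ := Finset.exists_max_image Finset.univ (fun i => |v i|) Finset.univ_nonempty
  have hbi := hb i h q p
  rw [hh2] at hbi
  simp only [WP.EE] at hbi
  have hsle : Real.sqrt (∑ i, v i ^ 2) ≤ d * |v i| := by
    apply Real.sqrt_le_iff.2
    refine ⟨by positivity, ?_⟩
    have h1 : ∑ j, v j ^ 2 ≤ ∑ j : Fin d, |v i| ^ 2 := by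
      refine Finset.sum_le_sum fun j _ => ?_
      rw [← sq_abs (v j)]
      have := hi j (Finset.mem_univ j)
      gcongr
    have h2 : (1 : ℝ) ≤ d := by exact_mod_cast hd
    simp only [Finset.sum_const, Finset.card_univ, Fintype.card_fin, nsmul_eq_mul] at h1
    nlinarith [sq_nonneg (|v i|), mul_nonneg (mul_nonneg (by linarith) (by linarith) : (0 : ℝ) ≤ d * (d - 1)) (sq_nonneg |v i|)]
  have hpow : (h : ℝ) ^ (N + d) ≤ ε ^ (((N : ℝ) + 1) / 2) := by
    have h1 : ε ^ (((N : ℝ) + 1) / 2) = (h : ℝ) ^ (N + 1) := by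
      have : (h : ℝ) = ε ^ (1 / 2 : ℝ) := Real.sqrt_eq_rpow ε
      rw [this, ← Real.rpow_natCast, ← Real.rpow_mul hε0.le]
      congr 1
      push_cast
      ring
    rw [h1]
    exact pow_le_pow_of_le_one hh0.le h.2.2 (by omega)
  rw [le_div_iff₀ (by positivity)]
  set I := norm (E := ℂ) (∫ y : Fin d → ℝ,
          Complex.exp (-((∑ i, (y i - q i) ^ 2 : ℝ) : ℂ) / (2 * (ε : ℂ)))
            * Complex.exp (Complex.I *
                (((-(∑ i, p i * (y i - q i)) + r * S0 y : ℝ)) : ℂ) / (ε : ℂ))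
            * A0 y) with hI
  have hI0 : 0 ≤ I := norm_nonneg _
  have hCi : C i ≤ ∑ i, C i := Finset.single_le_sum (fun j _ => hC j) (Finset.mem_univ i)
  calc I * Real.sqrt (∑ i, v i ^ 2) ^ N ≤ I * (d * |v i|) ^ N := by gcongr
    _ = (d : ℝ) ^ N * (|v i| ^ N * I) := by rw [mul_pow]; ring
    _ ≤ (d : ℝ) ^ N * (C i * (h : ℝ) ^ (N + d)) := by gcongr
    _ ≤ (d : ℝ) ^ N * ((∑ i, C i) * ε ^ (((N : ℝ) + 1) / 2)) := by gcongr
    _ ≤ _ := by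
      have : 0 < ε ^ (((N : ℝ) + 1) / 2) := by positivity
      nlinarith
end
end

section
/- Let d, M ≥ 1, ε > 0, and let L_m, R_m : ℝ^d × ℝ^d → ℝ^M (m = 1,…,M) be bounded continuous functions satisfying Σ_{m=1}^M R_m(q,p) L_m(q,p)ᵀ = I_M for all (q,p). Then for every u_0 : ℝ^d → ℂ^M with Schwartz-class components and every x ∈ ℝ^d: (2πε)^{−3d/2} Σ_{m=1}^M ∫_{ℝ^d} ∫_{ℝ^d} ∫_{ℝ^d} 2^{d/2} e^{(i/ε) Φ₀(x,y,q,p)} R_m(q,p) ( L_m(q,p)ᵀ u_0(y) ) dy dp dq = u_0(x), where Φ₀(x,y,q,p) = (i/2)|x−q|² + p·(x−q) + (i/2)|y−q|² − p·(y−q) and each integral is the iterated integral (innermost in y, then p, then q). -/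
open MeasureTheory
noncomputable section

namespace FGA
open scoped FourierTransform RealInnerProductSpace

variable {d : ℕ}

def gq (ε : ℝ) (u : SchwartzMap (EuclideanSpace ℝ (Fin d)) ℂ) (q y : EuclideanSpace ℝ (Fin d)) : ℂ :=
  Complex.exp (-(1 / (2 * ε) : ℝ) * (‖y - q‖ : ℂ) ^ 2) * u y

def ker (ε : ℝ) (x q p y : EuclideanSpace ℝ (Fin d)) : ℂ :=
  Complex.exp ((Complex.I / (ε : ℂ)) *
            ((Complex.I / 2) * ((‖x - q‖ ^ 2 : ℝ) : ℂ)
              + ((⟪p, x - q⟫ : ℝ) : ℂ)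
              + (Complex.I / 2) * ((‖y - q‖ ^ 2 : ℝ) : ℂ)
              - ((⟪p, y - q⟫ : ℝ) : ℂ)))

def FF (ε : ℝ) (u : SchwartzMap (EuclideanSpace ℝ (Fin d)) ℂ) (x q p : EuclideanSpace ℝ (Fin d)) : ℂ :=
  ∫ y, ker ε x q p y * u y

theorem ker_norm_le (ε : ℝ) (hε : 0 < ε) (x q p y : EuclideanSpace ℝ (Fin d)) :
    ‖ker ε x q p y‖ ≤ 1 := by
  unfold ker
  rw [Complex.norm_exp, Real.exp_le_one_iff]
  have : (Complex.I / (ε : ℂ)) *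
            ((Complex.I / 2) * ((‖x - q‖ ^ 2 : ℝ) : ℂ)
              + ((⟪p, x - q⟫ : ℝ) : ℂ)
              + (Complex.I / 2) * ((‖y - q‖ ^ 2 : ℝ) : ℂ)
              - ((⟪p, y - q⟫ : ℝ) : ℂ)) =
     ((-(‖x - q‖ ^ 2 + ‖y - q‖ ^ 2) / (2 * ε) : ℝ) : ℂ) +
       (((⟪p, x - q⟫ - ⟪p, y - q⟫) / ε : ℝ) : ℂ) * Complex.I := by
    have : (ε : ℂ) ≠ 0 := by exact_mod_cast hε.ne'
    push_cast
    field_simp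
    ring_nf
    simp only [Complex.I_sq]
    ring
  rw [this]
  simp only [Complex.add_re, Complex.ofReal_re, Complex.re_ofReal_mul, Complex.I_re, mul_zero,
    add_zero]
  apply div_nonpos_of_nonpos_of_nonneg
  · have := sq_nonneg ‖x - q‖
    have := sq_nonneg ‖y - q‖
    linarith
  · positivity

theorem ker_cont (ε : ℝ) (x : EuclideanSpace ℝ (Fin d)) :
    Continuous (fun z : (EuclideanSpace ℝ (Fin d) × EuclideanSpace ℝ (Fin d)) × EuclideanSpace ℝ (Fin d) =>
      ker ε x z.1.1 z.1.2 z.2) := by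
  unfold ker
  fun_prop

theorem ker_integrable (ε : ℝ) (hε : 0 < ε) (u : SchwartzMap (EuclideanSpace ℝ (Fin d)) ℂ)
    (x q p : EuclideanSpace ℝ (Fin d)) : Integrable (fun y => ker ε x q p y * u y) := by
  apply u.integrable.bdd_mul (c := 1)
  · have := (ker_cont ε x).comp (f := fun y => ((q, p), y)) (by fun_prop)
    exact this.aestronglyMeasurable
  · exact Filter.Eventually.of_forall (fun y => ker_norm_le ε hε x q p y)

theorem gq_integrable (ε : ℝ) (hε : 0 < ε) (u : SchwartzMap (EuclideanSpace ℝ (Fin d)) ℂ)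
    (q : EuclideanSpace ℝ (Fin d)) : Integrable (gq ε u q) := by
  apply u.integrable.bdd_mul (c := 1)
  · apply Continuous.aestronglyMeasurable
    fun_prop
  · refine Filter.Eventually.of_forall (fun y => ?_)
    rw [Complex.norm_exp, Real.exp_le_one_iff]
    have : (-((1 / (2 * ε) : ℝ) : ℂ) * (‖y - q‖ : ℂ) ^ 2) = ((-((1 / (2 * ε)) * ‖y - q‖ ^ 2) : ℝ) : ℂ) := by
      push_cast; ring
    rw [this, Complex.ofReal_re]
    have : 0 ≤ (1 / (2 * ε)) * ‖y - q‖ ^ 2 := by positivity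
    linarith

theorem gq_cont (ε : ℝ) (u : SchwartzMap (EuclideanSpace ℝ (Fin d)) ℂ)
    (q : EuclideanSpace ℝ (Fin d)) : Continuous (gq ε u q) := by
  unfold gq
  have := u.continuous
  fun_prop

theorem FF_eq (ε : ℝ) (hε : 0 < ε) (u : SchwartzMap (EuclideanSpace ℝ (Fin d)) ℂ)
    (x q p : EuclideanSpace ℝ (Fin d)) :
    FF ε u x q p = Complex.exp (-(1 / (2 * ε) : ℝ) * (‖x - q‖ : ℂ) ^ 2) *
      (Complex.exp (((2 * Real.pi * ⟪(2 * Real.pi * ε)⁻¹ • p, x⟫ : ℝ) : ℂ) * Complex.I) •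
        𝓕 (gq ε u q) ((2 * Real.pi * ε)⁻¹ • p)) := by
  unfold FF
  rw [Real.fourier_eq', smul_eq_mul, ← integral_const_mul, ← integral_const_mul]
  congr 1
  ext y
  unfold gq ker
  rw [smul_eq_mul, ← mul_assoc, ← mul_assoc, ← mul_assoc, ← Complex.exp_add, ← Complex.exp_add,
    ← Complex.exp_add]
  congr 2
  simp only [inner_smul_left, inner_smul_right, inner_sub_right, real_inner_comm y p]
  have : (ε : ℂ) ≠ 0 := by exact_mod_cast hε.ne'
  have h2 : (Real.pi : ℂ) ≠ 0 := by exact_mod_cast Real.pi_ne_zero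
  simp
  field_simp
  ring_nf
  simp only [Complex.I_sq]
  ring

def Gh (ε : ℝ) (z : EuclideanSpace ℝ (Fin d)) : ℂ :=
  ∫ v, Complex.exp (-((1 / (2 * ε) : ℝ) : ℂ) * (‖v‖ : ℂ) ^ 2 + (-2 * Real.pi * Complex.I) * (⟪z, v⟫ : ℝ))

theorem Gh_eq (ε : ℝ) (hε : 0 < ε) (z : EuclideanSpace ℝ (Fin d)) :
    Gh ε z = (Real.pi / ((1 / (2 * ε) : ℝ) : ℂ)) ^ (Module.finrank ℝ (EuclideanSpace ℝ (Fin d)) / 2 : ℂ)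
      * Complex.exp (-((2 * Real.pi ^ 2 * ε : ℝ) : ℂ) * ‖z‖ ^ 2) := by
  unfold Gh
  rw [GaussianFourier.integral_cexp_neg_mul_sq_norm_add (by rw [Complex.ofReal_re]; positivity)]
  congr 2
  have : (ε : ℂ) ≠ 0 := by exact_mod_cast hε.ne'
  push_cast
  field_simp
  ring_nf
  simp only [Complex.I_sq]
  ring

theorem Gh_integrable (ε : ℝ) (hε : 0 < ε) :
    Integrable (Gh (d := d) ε) := by
  have : Gh (d := d) ε = fun z => (Real.pi / ((1 / (2 * ε) : ℝ) : ℂ)) ^ (Module.finrank ℝ (EuclideanSpace ℝ (Fin d)) / 2 : ℂ)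
      * Complex.exp (-((2 * Real.pi ^ 2 * ε : ℝ) : ℂ) * ‖z‖ ^ 2) := by
    ext z; exact Gh_eq ε hε z
  rw [this]
  apply Integrable.const_mul
  have := GaussianFourier.integrable_cexp_neg_mul_sq_norm_add (V := EuclideanSpace ℝ (Fin d))
    (b := ((2 * Real.pi ^ 2 * ε : ℝ) : ℂ)) (by rw [Complex.ofReal_re]; positivity) 0 0
  simpa using this

def hh (ε : ℝ) (u : SchwartzMap (EuclideanSpace ℝ (Fin d)) ℂ) (ξ : EuclideanSpace ℝ (Fin d)) : ℝ :=
  ∫ η, ‖(𝓕⁻ u) η‖ * ‖Gh ε (ξ + η)‖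

theorem hh_integrable (ε : ℝ) (hε : 0 < ε) (u : SchwartzMap (EuclideanSpace ℝ (Fin d)) ℂ) :
    Integrable (hh ε u) := by
  have h1 : Integrable (fun η => ‖(𝓕⁻ u) (-η)‖) := (𝓕⁻ u).integrable.norm.comp_neg
  have h2 := (Gh_integrable (d := d) ε hε).norm
  have := h1.integrable_convolution (ContinuousLinearMap.mul ℝ ℝ) h2
  convert this using 1
  ext ξ
  unfold hh
  rw [convolution_def, ← integral_neg_eq_self]
  simp [sub_eq_add_neg]

theorem bound (ε : ℝ) (hε : 0 < ε) (u : SchwartzMap (EuclideanSpace ℝ (Fin d)) ℂ)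
    (q ξ : EuclideanSpace ℝ (Fin d)) : ‖𝓕 (gq ε u q) ξ‖ ≤ hh ε u ξ := by
  set K : EuclideanSpace ℝ (Fin d) → ℂ := fun y =>
    Complex.exp (-((1 / (2 * ε) : ℝ) : ℂ) * (‖y - q‖ : ℂ) ^ 2 + (-2 * Real.pi * Complex.I) * (⟪ξ, y⟫ : ℝ)) with hK
  have hKi : Integrable K := by
    have := GaussianFourier.integrable_cexp_neg_mul_sq_norm_add (V := EuclideanSpace ℝ (Fin d))
      (b := ((1 / (2 * ε) : ℝ) : ℂ)) (by rw [Complex.ofReal_re]; positivity) (-2 * Real.pi * Complex.I) ξ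
    have := (this.comp_sub_right q).const_mul (Complex.exp ((-2 * Real.pi * Complex.I) * (⟪ξ, q⟫ : ℝ)))
    convert this using 1
    ext y
    rw [← Complex.exp_add, hK]
    simp only [inner_sub_right]
    congr 1
    push_cast
    ring
  set w : SchwartzMap (EuclideanSpace ℝ (Fin d)) ℂ := 𝓕⁻ u with hw
  have hu : 𝓕 (⇑w) = u := by
    rw [← SchwartzMap.fourier_coe, hw]
    simp
  have hfl := VectorFourier.integral_fourierIntegral_smul_eq_flip (μ := volume) (ν := volume)
    (L := innerₗ (EuclideanSpace ℝ (Fin d))) (f := ⇑w) (g := K)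
    Real.continuous_fourierChar continuous_inner w.integrable hKi
  rw [flip_innerₗ] at hfl
  change ∫ y, (𝓕 (⇑w) y) • K y = ∫ η, w η • 𝓕 K η at hfl
  rw [hu] at hfl
  have h1 : 𝓕 (gq ε u q) ξ = ∫ y, u y • K y := by
    rw [Real.fourier_eq']
    congr 1
    ext y
    simp only [gq, hK, smul_eq_mul]
    rw [← mul_assoc, ← Complex.exp_add, mul_comm, real_inner_comm]
    congr 2
    push_cast
    ring
  have h2 : ∀ η, ‖𝓕 K η‖ = ‖Gh ε (ξ + η)‖ := by
    intro η
    have : 𝓕 K η = Complex.exp (((-2 * Real.pi * ⟪ξ + η, q⟫ : ℝ) : ℂ) * Complex.I) * Gh ε (ξ + η) := by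
      rw [Real.fourier_eq', Gh, ← integral_const_mul, ← integral_add_right_eq_self _ q]
      congr 1
      ext v
      simp only [hK, smul_eq_mul]
      rw [← Complex.exp_add, ← Complex.exp_add, add_sub_cancel_right]
      congr 1
      simp only [inner_add_left, inner_add_right, real_inner_comm v, real_inner_comm q]
      push_cast
      ring
    rw [this, norm_mul, Complex.norm_exp_ofReal_mul_I, one_mul]
  rw [h1, hfl]
  refine (norm_integral_le_integral_norm _).trans (le_of_eq ?_)
  unfold hh
  congr 1
  ext η
  rw [norm_smul, h2]

theorem F_integrable (ε : ℝ) (hε : 0 < ε) (u : SchwartzMap (EuclideanSpace ℝ (Fin d)) ℂ)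
    (q : EuclideanSpace ℝ (Fin d)) : Integrable (𝓕 (gq ε u q)) := by
  apply (hh_integrable ε hε u).mono'
  · apply Continuous.aestronglyMeasurable
    exact VectorFourier.fourierIntegral_continuous Real.continuous_fourierChar
      (innerSL ℝ).continuous₂ (gq_integrable ε hε u q)
  · exact Filter.Eventually.of_forall (bound ε hε u q)

theorem FF_meas (ε : ℝ) (u : SchwartzMap (EuclideanSpace ℝ (Fin d)) ℂ)
    (x : EuclideanSpace ℝ (Fin d)) :
    StronglyMeasurable (fun z : EuclideanSpace ℝ (Fin d) × EuclideanSpace ℝ (Fin d) => FF ε u x z.1 z.2) := by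
  unfold FF
  have hc := ker_cont ε x
  have hu := u.continuous
  have : Continuous (fun z : (EuclideanSpace ℝ (Fin d) × EuclideanSpace ℝ (Fin d)) × EuclideanSpace ℝ (Fin d) =>
      ker ε x z.1.1 z.1.2 z.2 * u z.2) := by fun_prop
  exact this.stronglyMeasurable.integral_prod_right'

theorem gauss_int (b : ℝ) (hb : 0 < b) (x : EuclideanSpace ℝ (Fin d)) :
    Integrable (fun q : EuclideanSpace ℝ (Fin d) => Complex.exp (-(b : ℂ) * (‖x - q‖ : ℂ) ^ 2)) := by
  have := GaussianFourier.integrable_cexp_neg_mul_sq_norm_add (V := EuclideanSpace ℝ (Fin d))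
      (b := (b : ℂ)) (by rwa [Complex.ofReal_re]) 0 0
  simpa using this.comp_sub_left x

theorem FF_integrable (ε : ℝ) (hε : 0 < ε) (u : SchwartzMap (EuclideanSpace ℝ (Fin d)) ℂ)
    (x : EuclideanSpace ℝ (Fin d)) :
    Integrable (fun z : EuclideanSpace ℝ (Fin d) × EuclideanSpace ℝ (Fin d) => FF ε u x z.1 z.2) := by
  have hR : (2 * Real.pi * ε)⁻¹ ≠ 0 := by positivity
  have h1 := (gauss_int (1 / (2 * ε)) (by positivity) x).norm
  have h2 := (hh_integrable ε hε u).comp_smul hR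
  refine (h1.mul_prod h2).mono' (FF_meas ε u x).aestronglyMeasurable ?_
  refine Filter.Eventually.of_forall (fun z => ?_)
  rw [FF_eq ε hε, norm_mul, norm_smul, Complex.norm_exp_ofReal_mul_I, one_mul]
  exact mul_le_mul_of_nonneg_left (bound ε hε u _ _) (norm_nonneg _)

theorem FF_int (ε : ℝ) (hε : 0 < ε) (u : SchwartzMap (EuclideanSpace ℝ (Fin d)) ℂ)
    (x : EuclideanSpace ℝ (Fin d)) :
    ∫ q, ∫ p, FF ε u x q p = (((2 * Real.pi * ε) ^ d * (Real.pi * ε) ^ ((d : ℝ) / 2) : ℝ) : ℂ) * u x := by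
  have hR : 0 < 2 * Real.pi * ε := by positivity
  have h1 : ∀ q, ∫ p, FF ε u x q p = (((2 * Real.pi * ε) ^ d : ℝ) : ℂ) * u x *
      Complex.exp (-((1 / ε : ℝ) : ℂ) * (‖x - q‖ : ℂ) ^ 2) := by
    intro q
    simp_rw [FF_eq ε hε]
    rw [integral_const_mul, Measure.integral_comp_inv_smul volume (fun ξ => Complex.exp (((2 * Real.pi * ⟪ξ, x⟫ : ℝ) : ℂ) * Complex.I) •
        𝓕 (gq ε u q) ξ), ← Real.fourierInv_eq',
        (gq_cont ε u q).fourierInv_fourier_eq (gq_integrable ε hε u q) (F_integrable ε hε u q)]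
    rw [finrank_euclideanSpace_fin, abs_of_pos (by positivity), gq, Complex.real_smul]
    have : Complex.exp (-((1 / ε : ℝ) : ℂ) * (‖x - q‖ : ℂ) ^ 2) =
       Complex.exp (-((1 / (2 * ε) : ℝ) : ℂ) * (‖x - q‖ : ℂ) ^ 2) * Complex.exp (-((1 / (2 * ε) : ℝ) : ℂ) * (‖x - q‖ : ℂ) ^ 2) := by
      rw [← Complex.exp_add]
      congr 1
      push_cast
      have : (ε : ℂ) ≠ 0 := by exact_mod_cast hε.ne'
      field_simp
      ring
    rw [this]
    ring
  simp_rw [h1]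
  rw [integral_const_mul, integral_sub_left_eq_self (fun q => Complex.exp (-((1 / ε : ℝ) : ℂ) * (‖q‖ : ℂ) ^ 2)),
    GaussianFourier.integral_cexp_neg_mul_sq_norm (by rw [Complex.ofReal_re]; positivity),
    finrank_euclideanSpace_fin]
  have : ((Real.pi : ℂ) / ((1 / ε : ℝ) : ℂ)) ^ ((d : ℂ) / 2) = (((Real.pi * ε) ^ ((d : ℝ) / 2) : ℝ) : ℂ) := by
    rw [Complex.ofReal_cpow (by positivity)]
    congr 1
    · push_cast; simp
    · push_cast; rfl
  rw [this]
  push_cast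
  ring

theorem transport (f : (Fin d → ℝ) → ℂ) :
    ∫ q, f q = ∫ q : EuclideanSpace ℝ (Fin d), f q.ofLp :=
  ((PiLp.volume_preserving_ofLp (Fin d)).integral_comp
    (MeasurableEquiv.toLp 2 (Fin d → ℝ)).symm.measurableEmbedding f).symm

def vv (u : SchwartzMap (Fin d → ℝ) ℂ) : SchwartzMap (EuclideanSpace ℝ (Fin d)) ℂ :=
  SchwartzMap.compCLMOfContinuousLinearEquiv ℂ
    (PiLp.continuousLinearEquiv 2 ℝ (fun _ : Fin d => ℝ)) u

theorem vv_apply (u : SchwartzMap (Fin d → ℝ) ℂ) (y : EuclideanSpace ℝ (Fin d)) :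
    vv u y = u y.ofLp := rfl

theorem consts (d : ℕ) (ε : ℝ) (hε : 0 < ε) :
    (2 * Real.pi * ε) ^ (-(3 * (d : ℝ)) / 2) * ((2 : ℝ) ^ ((d : ℝ) / 2) *
      ((2 * Real.pi * ε) ^ d * (Real.pi * ε) ^ ((d : ℝ) / 2))) = 1 := by
  have hR : 0 < 2 * Real.pi * ε := by positivity
  have h : (2 : ℝ) ^ ((d : ℝ) / 2) * (Real.pi * ε) ^ ((d : ℝ) / 2) = (2 * Real.pi * ε) ^ ((d : ℝ) / 2) := by
    rw [← Real.mul_rpow (by positivity) (by positivity), mul_assoc]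
  calc _ = (2 * Real.pi * ε) ^ (-(3 * (d : ℝ)) / 2) * (2 * Real.pi * ε) ^ d *
        ((2 : ℝ) ^ ((d : ℝ) / 2) * (Real.pi * ε) ^ ((d : ℝ) / 2)) := by ring
    _ = 1 := by
      rw [h, ← Real.rpow_natCast, ← Real.rpow_add hR, ← Real.rpow_add hR]
      convert Real.rpow_zero _ using 2
      ring

end FGA

/-- the frozen Gaussian approximation reproduces the initial datum at `t = 0`:
if the bounded continuous families `L_m, R_m` satisfy the completeness relation
`Σ_m R_m L_mᵀ = I`, then
`(2πε)^{−3d/2} Σ_m ∫∫∫ 2^{d/2} e^{iΦ₀/ε} R_m (L_mᵀ u₀)(y) dy dp dq = u₀(x)`. -/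
theorem stmt_19 (d M : ℕ) (hd : 1 ≤ d) (hM : 1 ≤ M) (ε : ℝ) (hε : 0 < ε)
    (L R : Fin M → (Fin d → ℝ) × (Fin d → ℝ) → Fin M → ℝ)
    (hLcont : ∀ m, Continuous (L m)) (hRcont : ∀ m, Continuous (R m))
    (hLbdd : ∃ C : ℝ, ∀ m w, ‖L m w‖ ≤ C) (hRbdd : ∃ C : ℝ, ∀ m w, ‖R m w‖ ≤ C)
    (hComplete : ∀ w : (Fin d → ℝ) × (Fin d → ℝ), ∀ i k : Fin M,
      ∑ m, R m w i * L m w k = if i = k then 1 else 0)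
    (u0 : Fin M → SchwartzMap (Fin d → ℝ) ℂ) (x : Fin d → ℝ) (i : Fin M) :
    (((2 * Real.pi * ε) ^ (-(3 * (d : ℝ)) / 2) : ℝ) : ℂ) *
      ∑ m, ∫ q : Fin d → ℝ, ∫ p : Fin d → ℝ, ∫ y : Fin d → ℝ,
        (((2 : ℝ) ^ ((d : ℝ) / 2) : ℝ) : ℂ) *
          Complex.exp ((Complex.I / (ε : ℂ)) *
            ((Complex.I / 2) * ((∑ j, (x j - q j) ^ 2 : ℝ) : ℂ)
              + ((∑ j, p j * (x j - q j) : ℝ) : ℂ)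
              + (Complex.I / 2) * ((∑ j, (y j - q j) ^ 2 : ℝ) : ℂ)
              - ((∑ j, p j * (y j - q j) : ℝ) : ℂ)))
          * ((R m (q, p) i : ℝ) : ℂ)
          * (∑ k, ((L m (q, p) k : ℝ) : ℂ) * u0 k y)
      = u0 i x := by
  classical
  obtain ⟨CL, hCL⟩ := hLbdd
  obtain ⟨CR, hCR⟩ := hRbdd
  set X : EuclideanSpace ℝ (Fin d) := WithLp.toLp 2 x with hX
  set c : ℂ := (((2 : ℝ) ^ ((d : ℝ) / 2) : ℝ) : ℂ) with hc
  have hinner : ∀ (m : Fin M) (q p : EuclideanSpace ℝ (Fin d)),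
      (∫ y : Fin d → ℝ, c *
          Complex.exp ((Complex.I / (ε : ℂ)) *
            ((Complex.I / 2) * ((∑ j, (x j - q j) ^ 2 : ℝ) : ℂ)
              + ((∑ j, p j * (x j - q j) : ℝ) : ℂ)
              + (Complex.I / 2) * ((∑ j, (y j - q j) ^ 2 : ℝ) : ℂ)
              - ((∑ j, p j * (y j - q j) : ℝ) : ℂ)))
          * ((R m (q.ofLp, p.ofLp) i : ℝ) : ℂ)
          * (∑ k, ((L m (q.ofLp, p.ofLp) k : ℝ) : ℂ) * u0 k y)) =
      ∑ k, c * ((((R m (q.ofLp, p.ofLp) i : ℝ) : ℂ) * ((L m (q.ofLp, p.ofLp) k : ℝ) : ℂ)) *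
        FGA.FF ε (FGA.vv (u0 k)) X q p) := by
    intro m q p
    rw [FGA.transport]
    unfold FGA.FF
    simp_rw [← integral_const_mul]
    rw [← integral_finsetSum _ (fun k _ =>
      ((FGA.ker_integrable ε hε (FGA.vv (u0 k)) X q p).const_mul _).const_mul _)]
    congr 1
    ext y
    rw [Finset.mul_sum]
    refine Finset.sum_congr rfl (fun k _ => ?_)
    have h1 : ∀ a b : EuclideanSpace ℝ (Fin d), ‖a - b‖ ^ 2 = ∑ j, (a j - b j) ^ 2 := by
      intro a b
      simp [EuclideanSpace.norm_sq_eq]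
    have h2 : ∀ a b : EuclideanSpace ℝ (Fin d), inner ℝ p (a - b) = ∑ j, p j * (a j - b j) := by
      intro a b
      simp [PiLp.inner_apply, mul_comm]
    rw [FGA.ker, h1, h1, h2, h2, FGA.vv_apply]
    simp only [hX]
    ring
  have hint : ∀ (m k : Fin M), Integrable (fun z : EuclideanSpace ℝ (Fin d) × EuclideanSpace ℝ (Fin d) =>
      c * ((((R m (z.1.ofLp, z.2.ofLp) i : ℝ) : ℂ) * ((L m (z.1.ofLp, z.2.ofLp) k : ℝ) : ℂ)) *
        FGA.FF ε (FGA.vv (u0 k)) X z.1 z.2)) (volume.prod volume) := by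
    intro m k
    refine Integrable.const_mul ?_ _
    refine Integrable.bdd_mul (c := CR * CL) (FGA.FF_integrable ε hε (FGA.vv (u0 k)) X) ?_ ?_
    · apply Continuous.aestronglyMeasurable
      have h1 := hRcont m
      have h2 := hLcont m
      fun_prop
    · refine Filter.Eventually.of_forall (fun z => ?_)
      rw [norm_mul, Complex.norm_real, Complex.norm_real]
      have hr := (norm_le_pi_norm (R m (z.1.ofLp, z.2.ofLp)) i).trans (hCR _ _)
      have hl := (norm_le_pi_norm (L m (z.1.ofLp, z.2.ofLp)) k).trans (hCL _ _)
      exact mul_le_mul hr hl (norm_nonneg _) ((norm_nonneg _).trans hr)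
  have hiter : ∀ m, (∫ q : Fin d → ℝ, ∫ p : Fin d → ℝ, ∫ y : Fin d → ℝ, c *
          Complex.exp ((Complex.I / (ε : ℂ)) *
            ((Complex.I / 2) * ((∑ j, (x j - q j) ^ 2 : ℝ) : ℂ)
              + ((∑ j, p j * (x j - q j) : ℝ) : ℂ)
              + (Complex.I / 2) * ((∑ j, (y j - q j) ^ 2 : ℝ) : ℂ)
              - ((∑ j, p j * (y j - q j) : ℝ) : ℂ)))
          * ((R m (q, p) i : ℝ) : ℂ)
          * (∑ k, ((L m (q, p) k : ℝ) : ℂ) * u0 k y)) =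
      ∫ z : EuclideanSpace ℝ (Fin d) × EuclideanSpace ℝ (Fin d),
        ∑ k, c * ((((R m (z.1.ofLp, z.2.ofLp) i : ℝ) : ℂ) * ((L m (z.1.ofLp, z.2.ofLp) k : ℝ) : ℂ)) *
        FGA.FF ε (FGA.vv (u0 k)) X z.1 z.2) ∂(volume.prod volume) := by
    intro m
    rw [integral_prod _ (integrable_finsetSum _ (fun k _ => hint m k)), FGA.transport]
    congr 1
    ext q
    rw [FGA.transport]
    congr 1
    ext p
    exact hinner m q p
  rw [Finset.sum_congr rfl (fun m _ => hiter m),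
    ← integral_finsetSum _ (fun m _ => integrable_finsetSum _ (fun k _ => hint m k))]
  have hcol : ∀ z : EuclideanSpace ℝ (Fin d) × EuclideanSpace ℝ (Fin d),
      (∑ m, ∑ k, c * ((((R m (z.1.ofLp, z.2.ofLp) i : ℝ) : ℂ) * ((L m (z.1.ofLp, z.2.ofLp) k : ℝ) : ℂ)) *
        FGA.FF ε (FGA.vv (u0 k)) X z.1 z.2)) = c * FGA.FF ε (FGA.vv (u0 i)) X z.1 z.2 := by
    intro z
    rw [Finset.sum_comm]
    have : ∀ k, (∑ m, c * ((((R m (z.1.ofLp, z.2.ofLp) i : ℝ) : ℂ) * ((L m (z.1.ofLp, z.2.ofLp) k : ℝ) : ℂ)) *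
        FGA.FF ε (FGA.vv (u0 k)) X z.1 z.2)) =
        if i = k then c * FGA.FF ε (FGA.vv (u0 k)) X z.1 z.2 else 0 := by
      intro k
      have h := congrArg (fun r : ℝ => (r : ℂ)) (hComplete (z.1.ofLp, z.2.ofLp) i k)
      push_cast at h
      rw [← Finset.mul_sum, ← Finset.sum_mul, h]
      split_ifs <;> simp
    rw [Finset.sum_congr rfl (fun k _ => this k)]
    simp
  simp_rw [hcol]
  rw [integral_const_mul, integral_prod _ (FGA.FF_integrable ε hε (FGA.vv (u0 i)) X),
    FGA.FF_int ε hε, FGA.vv_apply, hc, ← mul_assoc, ← mul_assoc, ← Complex.ofReal_mul,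
    ← Complex.ofReal_mul, mul_assoc ((2 * Real.pi * ε) ^ (-(3 * (d : ℝ)) / 2)),
    FGA.consts d ε hε]
  simp [hX]
end
end
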